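/- Let (λ_n)_{n≥1} be positive real numbers satisfying (i) Σ_{n≥1} 1/λ_n = +∞ and (ii) the doubling condition: there exists C > 1 such that C⁻¹ λ_n ≤ λ_k ≤ C λ_n whenever n ≥ 1 and n ≤ k ≤ 2n; assume also λ_n ≥ 1 for all n. Let X be the complete metric space whose points are pairs (f, E) with f ∈ L²(𝕋, m), 0 ≤ f ≤ 2 m-a.e., ‖f‖_{ℓ²(λ)} < ∞, and E ⊆ 𝕋 a nonempty compact set containing the support of the measure f·m, equipped with the metric d_λ((f,E),(g,K)) = ‖f − g‖_{ℓ²(λ)} + d_𝒞(E,K). Then the set of pairs (f, E) ∈ X such that E has empty interior in 𝕋 is comeagre (residual) in X; in particular it contains a dense intersection of countably many open dense subsets of X. -/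

import Mathlib

open MeasureTheory Filter Topology

noncomputable section

/-- Normalized Haar (arc-length) probability measure on the circle `𝕋 = ℝ/ℤ`. -/
def hm : Measure UnitAddCircle := AddCircle.haarAddCircle

/-- Fourier coefficients of a real-valued function on the circle. -/
def fc (f : UnitAddCircle → ℝ) (n : ℤ) : ℂ := fourierCoeff (fun x => (f x : ℂ)) n

/-- The support of the measure `f·m`: the complement of the largest open set on which `f`
vanishes `m`-a.e. -/
def measSupport (f : UnitAddCircle → ℝ) : Set UnitAddCircle :=
  (⋃₀ {U : Set UnitAddCircle | IsOpen U ∧ ∀ᵐ x ∂hm, x ∈ U → f x = 0})ᶜ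

/-- The Hausdorff-type metric `d_𝒞(E,K) = sup_{ζ∈E} dist(ζ,K) + sup_{ξ∈K} dist(ξ,E)` on
nonempty compact subsets of the circle. -/
def dC (E K : Set UnitAddCircle) : ℝ :=
  (⨆ x : E, Metric.infDist (x : UnitAddCircle) K) +
    ⨆ y : K, Metric.infDist (y : UnitAddCircle) E

/-- The weighted `ℓ²(λ)` distance `‖f − g‖_{ℓ²(λ)}`. -/
def dlam (lam : ℕ → ℝ) (f g : UnitAddCircle → ℝ) : ℝ :=
  Real.sqrt (∑' n : ℤ, ‖fc f n - fc g n‖ ^ 2 * lam n.natAbs)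

/-- A point of the complete metric space `X`: a pair `(f, E)` with `f ∈ L²(𝕋)`,
`0 ≤ f ≤ 2` a.e., `‖f‖_{ℓ²(λ)} < ∞`, and `E ⊆ 𝕋` a nonempty compact set containing the
support of the measure `f·m`. -/
structure LPair (lam : ℕ → ℝ) where
  f : UnitAddCircle → ℝ
  E : Set UnitAddCircle
  memLp : MemLp f 2 hm
  bdd : ∀ᵐ x ∂hm, 0 ≤ f x ∧ f x ≤ 2
  sum : Summable (fun n : ℤ => ‖fc f n‖ ^ 2 * lam n.natAbs)
  cpt : IsCompact E
  nonempty : E.Nonempty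
  supp : measSupport f ⊆ E

/-- The metric `d_λ((f,E),(g,K)) = ‖f − g‖_{ℓ²(λ)} + d_𝒞(E,K)` on pairs. -/
def dPair (lam : ℕ → ℝ) (p q : LPair lam) : ℝ :=
  dlam lam p.f q.f + dC p.E q.E

lemma lam_pow (lam : ℕ → ℝ) (hlam : ∀ n, 1 ≤ lam n)
    (hdbl : ∃ C : ℝ, 1 < C ∧ ∀ n k : ℕ, 1 ≤ n → n ≤ k → k ≤ 2 * n →
      C⁻¹ * lam n ≤ lam k ∧ lam k ≤ C * lam n) :
    ∃ C0 : ℝ, 1 ≤ C0 ∧ ∃ M : ℕ, ∀ n k : ℕ, 1 ≤ n → n ≤ k →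
      lam k ≤ C0 * ((k : ℝ) / n) ^ M * lam n ∧ lam n ≤ C0 * ((k : ℝ) / n) ^ M * lam k := by
  obtain ⟨C, hC, h⟩ := hdbl
  obtain ⟨M, hM⟩ := pow_unbounded_of_one_lt C (one_lt_two)
  have hC0 : 0 < C := by linarith
  have h1 : ∀ n k : ℕ, 1 ≤ n → n ≤ k → k ≤ 2 * n → lam k ≤ C * lam n ∧ lam n ≤ C * lam k := by
    intro n k hn hk hk2
    obtain ⟨ha, hb⟩ := h n k hn hk hk2
    refine ⟨hb, ?_⟩
    rwa [inv_mul_le_iff₀ hC0] at ha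
  have h2 : ∀ i n : ℕ, 1 ≤ n → lam (2 ^ i * n) ≤ C ^ i * lam n ∧ lam n ≤ C ^ i * lam (2 ^ i * n) := by
    intro i n hn
    induction i with
    | zero => simp
    | succ i ih =>
      have hp : 1 ≤ 2 ^ i * n := Nat.mul_pos (by positivity) hn
      obtain ⟨ha, hb⟩ := h1 (2 ^ i * n) (2 ^ (i + 1) * n) hp
        (by rw [pow_succ]; nlinarith) (by rw [pow_succ]; nlinarith)
      have hCi : 0 < C ^ i := by positivity
      constructor
      · calc _ ≤ C * lam (2 ^ i * n) := ha
          _ ≤ C * (C ^ i * lam n) := by gcongr; exact ih.1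
          _ = _ := by ring
      · calc _ ≤ C ^ i * lam (2 ^ i * n) := ih.2
          _ ≤ C ^ i * (C * lam (2 ^ (i + 1) * n)) := by gcongr
          _ = _ := by ring
  refine ⟨C, hC.le, M, fun n k hn hk => ?_⟩
  have hkn : k / n ≠ 0 := by
    have := Nat.div_pos hk hn
    omega
  set i := Nat.log 2 (k / n) with hi
  have hle : 2 ^ i ≤ k / n := Nat.pow_log_le_self 2 hkn
  have hlt : k / n < 2 ^ (i + 1) := Nat.lt_pow_succ_log_self (by norm_num) _
  have hle' : 2 ^ i * n ≤ k := by
    rwa [Nat.le_div_iff_mul_le hn] at hle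
  have hlt' : k < 2 ^ (i + 1) * n := by
    rwa [Nat.div_lt_iff_lt_mul hn] at hlt
  have hp : 1 ≤ 2 ^ i * n := Nat.mul_pos (by positivity) hn
  obtain ⟨ha, hb⟩ := h1 (2 ^ i * n) k hp hle' (by rw [pow_succ] at hlt'; nlinarith)
  obtain ⟨hc, hd⟩ := h2 i n hn
  have hn' : (0 : ℝ) < n := by exact_mod_cast hn
  have hq : (2 : ℝ) ^ i ≤ (k : ℝ) / n := by
    rw [le_div_iff₀ hn']; exact_mod_cast hle'
  have hCi : C ^ i ≤ ((k : ℝ) / n) ^ M := by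
    calc C ^ i ≤ ((2 : ℝ) ^ M) ^ i := by gcongr
      _ = ((2 : ℝ) ^ i) ^ M := by rw [← pow_mul, ← pow_mul, mul_comm]
      _ ≤ _ := by gcongr
  have hln := hlam n
  have hlk := hlam k
  constructor
  · calc lam k ≤ C * (C ^ i * lam n) := ha.trans (by gcongr)
      _ ≤ C * (((k : ℝ) / n) ^ M * lam n) := by gcongr
      _ = _ := by ring
  · calc lam n ≤ C ^ i * (C * lam k) := hd.trans (by gcongr)
      _ ≤ ((k : ℝ) / n) ^ M * (C * lam k) := by gcongr
      _ = _ := by ring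

lemma lam_shift (lam : ℕ → ℝ) (hlam : ∀ n, 1 ≤ lam n) (C0 : ℝ) (hC0 : 1 ≤ C0) (M : ℕ)
    (h : ∀ n k : ℕ, 1 ≤ n → n ≤ k →
      lam k ≤ C0 * ((k : ℝ) / n) ^ M * lam n ∧ lam n ≤ C0 * ((k : ℝ) / n) ^ M * lam k) :
    ∃ C1 : ℝ, 0 < C1 ∧ ∀ n k : ℤ, lam n.natAbs ≤ C1 * (1 + |(k : ℝ)|) ^ M * lam (n - k).natAbs := by
  have p0 := hlam 0
  have p1 := hlam 1
  refine ⟨C0 * lam 0 * lam 1, by positivity, fun n k => ?_⟩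
  have hK : (1 : ℝ) ≤ 1 + |(k : ℝ)| := by linarith [abs_nonneg (k : ℝ)]
  have hKM : (1 : ℝ) ≤ (1 + |(k : ℝ)|) ^ M := one_le_pow₀ hK
  have q := hlam (n - k).natAbs
  have key : ∀ x : ℝ, 0 ≤ x → x ≤ C0 * lam 0 * lam 1 * x := by
    intro x hx
    have : 1 ≤ C0 * lam 0 * lam 1 := one_le_mul_of_one_le_of_one_le (one_le_mul_of_one_le_of_one_le hC0 p0) p1
    nlinarith
  rcases Nat.eq_zero_or_pos n.natAbs with hn | hn
  · rw [hn]
    calc lam 0 ≤ C0 * lam 0 * lam 1 * 1 * 1 := by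
            have : 1 ≤ C0 * lam 1 := one_le_mul_of_one_le_of_one_le hC0 p1
            nlinarith
      _ ≤ _ := by gcongr
  rcases Nat.eq_zero_or_pos (n - k).natAbs with hm | hm
  · rw [hm]
    have hnk : n = k := by omega
    have := (h 1 n.natAbs le_rfl hn).1
    have e : ((n.natAbs : ℕ) : ℝ) = |(k : ℝ)| := by rw [hnk]; simp
    rw [e] at this
    simp only [Nat.cast_one, div_one] at this
    calc lam n.natAbs ≤ C0 * |(k : ℝ)| ^ M * lam 1 := this
      _ ≤ C0 * (1 + |(k : ℝ)|) ^ M * lam 1 := by gcongr; linarith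
      _ ≤ C0 * (1 + |(k : ℝ)|) ^ M * lam 1 * (lam 0 * lam 0) := by
          apply le_mul_of_one_le_right (by positivity)
          nlinarith
      _ = _ := by ring
  · have tri1 : (n.natAbs : ℝ) ≤ (n - k).natAbs + |(k : ℝ)| := by
      have : |n| ≤ |n - k| + |k| := by
        calc |n| = |(n - k) + k| := by ring_nf
          _ ≤ _ := abs_add_le _ _
      rw [Nat.cast_natAbs, Nat.cast_natAbs]
      exact_mod_cast this
    have tri2 : ((n - k).natAbs : ℝ) ≤ n.natAbs + |(k : ℝ)| := by
      have : |n - k| ≤ |n| + |k| := abs_sub _ _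
      rw [Nat.cast_natAbs, Nat.cast_natAbs]
      exact_mod_cast this
    have gen : ∀ a b : ℕ, 1 ≤ b → (a : ℝ) ≤ b + |(k : ℝ)| → (a : ℝ) / b ≤ 1 + |(k : ℝ)| := by
      intro a b hb hab
      have hb' : (1 : ℝ) ≤ b := by exact_mod_cast hb
      rw [div_le_iff₀ (by linarith)]
      nlinarith [abs_nonneg (k : ℝ)]
    have main : lam n.natAbs ≤ C0 * (1 + |(k : ℝ)|) ^ M * lam (n - k).natAbs := by
      rcases le_total n.natAbs (n - k).natAbs with hle | hle
      · refine (h _ _ hn hle).2.trans ?_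
        have := gen _ _ hn tri2
        gcongr
      · refine (h _ _ hm hle).1.trans ?_
        have := gen _ _ hm tri1
        gcongr
    refine main.trans ?_
    have := key _ (show 0 ≤ (1 + |(k : ℝ)|) ^ M * lam (n - k).natAbs by positivity)
    have h3 : 1 ≤ lam 0 * lam 1 := one_le_mul_of_one_le_of_one_le p0 p1
    calc _ ≤ C0 * (1 + |(k : ℝ)|) ^ M * lam (n - k).natAbs * (lam 0 * lam 1) :=
          le_mul_of_one_le_right (by positivity) h3
      _ = _ := by ring

lemma lam_cond (lam : ℕ → ℝ) (hlam : ∀ n, 1 ≤ lam n) (C0 : ℝ) (hC0 : 1 ≤ C0) (M : ℕ)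
    (h : ∀ n k : ℕ, 1 ≤ n → n ≤ k →
      lam k ≤ C0 * ((k : ℝ) / n) ^ M * lam n ∧ lam n ≤ C0 * ((k : ℝ) / n) ^ M * lam k)
    (hdiv : ¬ Summable (fun n : ℕ => 1 / lam (n + 1))) (A : ℕ) (hA : 2 ≤ A) :
    ¬ Summable (fun j : ℕ => min 1 ((A : ℝ) ^ j / lam (A ^ j))) := by
  intro hs
  have hpos : ∀ n, 0 < lam n := fun n => lt_of_lt_of_le one_pos (hlam n)
  have hA0 : (0 : ℝ) < A := by positivity
  -- drop the min
  have hs2 : Summable (fun j : ℕ => (A : ℝ) ^ j / lam (A ^ j)) := by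
    have ht := hs.tendsto_atTop_zero
    have hev : ∀ᶠ j in atTop, min 1 ((A : ℝ) ^ j / lam (A ^ j)) < 1 :=
      ht.eventually (gt_mem_nhds one_pos)
    obtain ⟨J, hJ⟩ := eventually_atTop.1 hev
    rw [← summable_nat_add_iff J] at hs ⊢
    refine hs.congr fun j => ?_
    have := hJ (j + J) (by omega)
    rw [min_eq_right]
    by_contra hc
    push Not at hc
    rw [min_eq_left hc.le] at this
    exact lt_irrefl _ this
  apply hdiv
  set w : ℕ → ℝ := fun j => (A : ℝ) ^ j / lam (A ^ j) with hw
  have hw0 : ∀ j, 0 ≤ w j := fun j => by have := hpos (A ^ j); positivity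
  have hblock : ∀ j, ∑ n ∈ Finset.Ico (A ^ j) (A ^ (j + 1)), 1 / lam n ≤ C0 * A ^ (M + 1) * w j := by
    intro j
    have hAj : 1 ≤ A ^ j := Nat.one_le_pow _ _ (by omega)
    have : ∀ n ∈ Finset.Ico (A ^ j) (A ^ (j + 1)), 1 / lam n ≤ C0 * A ^ M / lam (A ^ j) := by
      intro n hn
      rw [Finset.mem_Ico] at hn
      rw [div_le_div_iff₀ (hpos _) (hpos _), one_mul]
      refine (h _ _ hAj hn.1).2.trans ?_
      have := hpos n
      have hh : (n : ℝ) / (A ^ j : ℕ) ≤ A := by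
        rw [div_le_iff₀ (by exact_mod_cast hAj)]
        have := hn.2.le
        rw [pow_succ, mul_comm] at this
        exact_mod_cast this
      gcongr
    refine (Finset.sum_le_card_nsmul _ _ _ this).trans ?_
    rw [Nat.card_Ico, nsmul_eq_mul]
    have h5 : ((A ^ (j + 1) - A ^ j : ℕ) : ℝ) ≤ (A : ℝ) ^ (j + 1) := by
      exact_mod_cast Nat.sub_le _ _
    have := hpos (A ^ j)
    calc _ ≤ (A : ℝ) ^ (j + 1) * (C0 * A ^ M / lam (A ^ j)) := by gcongr
      _ = _ := by simp only [hw]; ring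
  have hI : ∀ J, ∑ n ∈ Finset.Ico 1 (A ^ J), 1 / lam n ≤ C0 * A ^ (M + 1) * ∑ j ∈ Finset.range J, w j := by
    intro J
    induction J with
    | zero => simp
    | succ J ih =>
      rw [← Finset.sum_Ico_consecutive _ (Nat.one_le_pow J A (by omega))
        (Nat.pow_le_pow_right (by omega) (Nat.le_succ J)), Finset.sum_range_succ, mul_add]
      exact add_le_add ih (hblock J)
  refine summable_of_sum_range_le (c := C0 * A ^ (M + 1) * ∑' j, w j) (fun n => by have := hpos (n+1); positivity) fun n => ?_
  have : n + 1 ≤ A ^ (n + 1) := (Nat.lt_pow_self (by omega)).le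
  calc _ = ∑ n ∈ Finset.Ico 1 (n + 1), 1 / lam n := by
        rw [Finset.sum_Ico_eq_sum_range]
        simp [add_comm]
    _ ≤ ∑ n ∈ Finset.Ico 1 (A ^ (n + 1)), 1 / lam n := by
        apply Finset.sum_le_sum_of_subset_of_nonneg
        · exact Finset.Ico_subset_Ico_right this
        · intro i _ _; have := hpos i; positivity
    _ ≤ _ := hI _
    _ ≤ _ := by gcongr; exact hs2.sum_le_tsum _ (fun j _ => hw0 j)

/-- Fourier transform on the line. -/
def ft (g : ℝ → ℝ) (ξ : ℝ) : ℂ := ∫ x : ℝ, Complex.exp (-2 * Real.pi * Complex.I * x * ξ) * (g x : ℂ)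

structure IsBmp (g : ℝ → ℝ) : Prop where
  smooth : ContDiff ℝ (⊤ : ℕ∞) g
  even : ∀ x, g (-x) = g x
  le : ∀ x, |g x| ≤ 1
  supp : ∃ R : ℝ, 0 < R ∧ ∀ x, R ≤ |x| → g x = 0
  one : ∃ r : ℝ, 0 < r ∧ ∀ x, |x| ≤ r → g x = 1

lemma IsBmp.hcs {g : ℝ → ℝ} (hg : IsBmp g) : HasCompactSupport g := by
  obtain ⟨R, hR, h⟩ := hg.supp
  refine HasCompactSupport.of_support_subset_isCompact (isCompact_Icc (a := -R) (b := R)) ?_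
  intro x hx
  by_contra hc
  apply hx
  apply h
  by_contra hh
  push Not at hh
  rw [abs_lt] at hh
  exact hc ⟨hh.1.le, hh.2.le⟩

lemma IsBmp.int {g : ℝ → ℝ} (hg : IsBmp g) (ξ : ℝ) (a : ℝ) :
    Integrable (fun x : ℝ => Complex.exp (-2 * Real.pi * Complex.I * x * ξ) * (g (x + a) : ℂ)) := by
  have h1 : Integrable g := hg.smooth.continuous.integrable_of_hasCompactSupport hg.hcs
  have h2 : Integrable (fun x => (g (x + a) : ℂ)) := (h1.comp_add_right a).ofReal
  refine h2.bdd_mul (c := 1) (by fun_prop) ?_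
  refine Eventually.of_forall fun x => ?_
  rw [show (-2 * Real.pi * Complex.I * x * ξ : ℂ) = ((-2 * Real.pi * x * ξ : ℝ) : ℂ) * Complex.I by
    push_cast; ring]
  rw [Complex.norm_exp_ofReal_mul_I]

lemma ft_eq_fourier (g : ℝ → ℝ) (ξ : ℝ) :
    ft g ξ = FourierTransform.fourier (fun x : ℝ => (g x : ℂ)) ξ := by
  rw [Real.fourier_real_eq_integral_exp_smul]
  unfold ft
  congr 1
  ext x
  rw [smul_eq_mul]
  congr 2
  push_cast
  ring

lemma IsBmp.decay {g : ℝ → ℝ} (hg : IsBmp g) (K : ℕ) : ∃ B : ℝ, 0 < B ∧ ∀ ξ : ℝ, |ξ| ^ K * ‖ft g ξ‖ ≤ B := by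
  have hcs : HasCompactSupport (fun x : ℝ => (g x : ℂ)) := hg.hcs.comp_left (g := fun t : ℝ => (t : ℂ)) (by simp)
  have hsm : ContDiff ℝ (⊤ : ℕ∞) (fun x : ℝ => (g x : ℂ)) := Complex.ofRealCLM.contDiff.comp hg.smooth
  obtain ⟨B, hB, h⟩ := (FourierTransform.fourier (hcs.toSchwartzMap hsm)).decay K 0
  refine ⟨B, hB, fun ξ => ?_⟩
  have := h ξ
  rw [norm_iteratedFDeriv_zero, SchwartzMap.fourier_coe] at this
  rw [ft_eq_fourier]
  exact this

lemma IsBmp.cont {g : ℝ → ℝ} (hg : IsBmp g) : Continuous (ft g) := by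
  have hcs : HasCompactSupport (fun x : ℝ => (g x : ℂ)) := hg.hcs.comp_left (g := fun t : ℝ => (t : ℂ)) (by simp)
  have hsm : ContDiff ℝ (⊤ : ℕ∞) (fun x : ℝ => (g x : ℂ)) := Complex.ofRealCLM.contDiff.comp hg.smooth
  have := (FourierTransform.fourier (hcs.toSchwartzMap hsm)).continuous
  rw [SchwartzMap.fourier_coe] at this
  rw [show ft g = _ from funext (ft_eq_fourier g)]
  exact this

lemma ft_shift (g : ℝ → ℝ) (a ξ : ℝ) :
    ∫ x : ℝ, Complex.exp (-2 * Real.pi * Complex.I * x * ξ) * (g (x + a) : ℂ)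
      = Complex.exp (2 * Real.pi * Complex.I * a * ξ) * ft g ξ := by
  unfold ft
  rw [← integral_const_mul]
  rw [← integral_add_right_eq_self (μ := volume) (fun x : ℝ => Complex.exp (2 * Real.pi * Complex.I * a * ξ) * (Complex.exp (-2 * Real.pi * Complex.I * x * ξ) * (g x : ℂ))) a]
  congr 1
  ext x
  rw [← mul_assoc, ← Complex.exp_add]
  congr 2
  push_cast
  ring

lemma exists_bmp0 : ∃ g : ℝ → ℝ, IsBmp g ∧ (∀ x, 0 ≤ g x) := by
  let b : ContDiffBump (0 : ℝ) := ⟨1, 2, one_pos, one_lt_two⟩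
  refine ⟨b, ⟨b.contDiff, b.neg, fun x => ?_, ⟨2, two_pos, fun x hx => ?_⟩, ⟨1, one_pos, fun x hx => ?_⟩⟩, fun x => b.nonneg⟩
  · rw [abs_of_nonneg b.nonneg]; exact b.le_one
  · exact b.zero_of_le_dist (by simpa [b] using hx)
  · exact b.one_of_mem_closedBall (by simpa [b] using hx)

lemma exists_bmp (k : ℕ) : ∃ g : ℝ → ℝ, IsBmp g ∧ ∃ B : ℝ, 0 < B ∧ ∀ ξ : ℝ, ‖ft g ξ‖ ≤ B * |ξ| ^ (2 * k) := by
  induction k with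
  | zero =>
    obtain ⟨g, hg, -⟩ := exists_bmp0
    obtain ⟨B, hB, h⟩ := hg.decay 0
    exact ⟨g, hg, B, hB, fun ξ => by simpa using h ξ⟩
  | succ k ih =>
    obtain ⟨g, hg, B, hB, hb⟩ := ih
    obtain ⟨R, hR, hsupp⟩ := hg.supp
    obtain ⟨r, hr, hone⟩ := hg.one
    set h : ℝ := 2 * R with hh
    have hin : ∀ x, |x| < R → g x - (g (x + h) + g (x + -h)) / 2 = g x := by
      intro x hx
      rw [abs_lt] at hx
      rw [hsupp (x + h) (by rw [le_abs]; left; linarith), hsupp (x + -h) (by rw [le_abs]; right; linarith)]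
      simp
    refine ⟨fun x => g x - (g (x + h) + g (x + -h)) / 2, ⟨?_, ?_, ?_, ⟨3 * R, by positivity, ?_⟩, ⟨min r (R / 2), by positivity, ?_⟩⟩, B * ((2 * Real.pi * h) ^ 2 / 2), by positivity, ?_⟩
    · have := hg.smooth
      fun_prop
    · intro x
      rw [hg.even x, show -x + h = -(x + -h) by ring, show -x + -h = -(x + h) by ring, hg.even, hg.even]
      ring
    · intro x
      rcases lt_or_ge (|x|) R with hx | hx
      · rw [hin x hx]; exact hg.le x
      · rw [hsupp x hx]
        have h1 := abs_le.1 (hg.le (x + h))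
        have h2 := abs_le.1 (hg.le (x + -h))
        rw [abs_le]
        constructor <;> linarith [h1.1, h1.2, h2.1, h2.2]
    · intro x hx
      rw [hsupp x (by linarith), hsupp (x + h), hsupp (x + -h)]
      · simp
      · rw [le_abs] at hx ⊢
        rcases hx with hx | hx
        · left; linarith
        · right; linarith
      · rw [le_abs] at hx ⊢
        rcases hx with hx | hx
        · left; linarith
        · right; linarith
    · intro x hx
      have h1 := hx.trans (min_le_left _ _)
      have h2 := hx.trans (min_le_right _ _)
      show g x - (g (x + h) + g (x + -h)) / 2 = 1
      rw [hin x (by linarith), hone x h1]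
    · intro ξ
      have e : ft (fun x => g x - (g (x + h) + g (x + -h)) / 2) ξ = ft g ξ * ((1 - Real.cos (2 * Real.pi * h * ξ) : ℝ) : ℂ) := by
        have e1 : ft (fun x => g x - (g (x + h) + g (x + -h)) / 2) ξ =
            (∫ x : ℝ, Complex.exp (-2 * Real.pi * Complex.I * x * ξ) * (g (x + 0) : ℂ)) -
            ((∫ x : ℝ, Complex.exp (-2 * Real.pi * Complex.I * x * ξ) * (g (x + h) : ℂ)) +
             (∫ x : ℝ, Complex.exp (-2 * Real.pi * Complex.I * x * ξ) * (g (x + -h) : ℂ))) / 2 := by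
          have hi : Integrable (fun x : ℝ => (Complex.exp (-2 * Real.pi * Complex.I * x * ξ) * (g (x + h) : ℂ)
              + Complex.exp (-2 * Real.pi * Complex.I * x * ξ) * (g (x + -h) : ℂ)) / 2) :=
            ((hg.int ξ h).add (hg.int ξ (-h))).div_const 2
          rw [← integral_add (hg.int ξ _) (hg.int ξ _), ← integral_div, ← integral_sub (hg.int ξ 0) hi]
          unfold ft
          congr 1
          ext x
          push_cast
          rw [add_zero]
          ring
        rw [e1, ft_shift, ft_shift, ft_shift]
        push_cast
        rw [Complex.cos]
        rw [show (2 * Real.pi * Complex.I * h * ξ : ℂ) = 2 * Real.pi * h * ξ * Complex.I by ring,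
          show (2 * Real.pi * Complex.I * -h * ξ : ℂ) = -(2 * Real.pi * h * ξ) * Complex.I by ring]
        simp
        ring
      rw [e, norm_mul, Complex.norm_real, Real.norm_eq_abs]
      have c1 : |1 - Real.cos (2 * Real.pi * h * ξ)| ≤ (2 * Real.pi * h * ξ) ^ 2 / 2 := by
        rw [abs_of_nonneg (by linarith [Real.cos_le_one (2 * Real.pi * h * ξ)])]
        linarith [Real.one_sub_sq_div_two_le_cos (x := 2 * Real.pi * h * ξ)]
      calc _ ≤ (B * |ξ| ^ (2 * k)) * ((2 * Real.pi * h * ξ) ^ 2 / 2) := by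
            gcongr; exact hb ξ
        _ = _ := by
            rw [show 2 * (k + 1) = 2 * k + 2 by ring, pow_add, sq_abs]; ring

/-- circle bump at scale `1/N`. -/
def cb (g : ℝ → ℝ) (N : ℝ) (x : UnitAddCircle) : ℝ := g (N * ‖x‖)

lemma cb_cont {g : ℝ → ℝ} (hg : IsBmp g) (N : ℝ) : Continuous (cb g N) := by
  unfold cb
  have := hg.smooth.continuous
  fun_prop

lemma fc_cb {g : ℝ → ℝ} (hg : IsBmp g) (R : ℝ) (hR : ∀ x, R ≤ |x| → g x = 0) (N : ℝ) (hN0 : 0 < N)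
    (hN : 2 * R ≤ N) (n : ℤ) : fc (cb g N) n = (N : ℂ)⁻¹ * ft g (n / N) := by
  unfold fc
  rw [fourierCoeff_eq_intervalIntegral _ _ (-(1 / 2))]
  have e1 : ∫ x : ℝ in (-(1/2) : ℝ)..(-(1/2) + 1), (fourier (-n) (x : UnitAddCircle) : ℂ) • ((cb g N x : ℝ) : ℂ)
      = ∫ x : ℝ in (-(1/2) : ℝ)..(-(1/2) + 1), Complex.exp (-2 * Real.pi * Complex.I * (N * x : ℝ) * (n / N : ℝ)) * (g (N * x) : ℂ) := by
    apply intervalIntegral.integral_congr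
    intro x hx
    rw [Set.uIcc_of_le (by norm_num)] at hx
    have habs : |x| ≤ 1 / 2 := abs_le.2 ⟨hx.1, by linarith [hx.2]⟩
    have hnorm : ‖(x : UnitAddCircle)‖ = |x| := (AddCircle.norm_coe_eq_abs_iff _ one_ne_zero).2 (by simpa using habs)
    have hgx : cb g N (x : UnitAddCircle) = g (N * x) := by
      unfold cb
      rw [hnorm]
      rcases abs_choice x with h | h
      · rw [h]
      · rw [h, mul_neg, hg.even]
    simp only
    rw [hgx, fourier_coe_apply, smul_eq_mul]
    congr 2
    have : (N : ℂ) ≠ 0 := by exact_mod_cast hN0.ne'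
    push_cast
    field_simp
  have e2 : ∫ x : ℝ in (-(1/2) : ℝ)..(-(1/2) + 1), Complex.exp (-2 * Real.pi * Complex.I * (N * x : ℝ) * (n / N : ℝ)) * (g (N * x) : ℂ)
     = ∫ x : ℝ, Complex.exp (-2 * Real.pi * Complex.I * (N * x : ℝ) * (n / N : ℝ)) * (g (N * x) : ℂ) := by
    apply intervalIntegral.integral_eq_integral_of_support_subset
    intro x hx
    by_contra hc
    apply hx
    have : g (N * x) = 0 := by
      apply hR
      rw [abs_mul, abs_of_pos hN0]
      have : 1 / 2 ≤ |x| := by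
        by_contra hh
        push Not at hh
        rw [abs_lt] at hh
        exact hc ⟨hh.1, by linarith [hh.2]⟩
      nlinarith
    simp [this]
  rw [e1, e2, Measure.integral_comp_mul_left (fun y : ℝ => Complex.exp (-2 * Real.pi * Complex.I * y * (n / N : ℝ)) * (g y : ℂ)) N]
  rw [abs_of_pos (by positivity)]
  unfold ft
  simp

lemma sum_poisson (N : ℝ) (hN : 1 ≤ N) :
    Summable (fun m : ℤ => N / (N ^ 2 + (m : ℝ) ^ 2)) ∧ ∑' m : ℤ, N / (N ^ 2 + (m : ℝ) ^ 2) ≤ 8 := by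
  have hb : ∀ n : ℕ, N / (N ^ 2 + (n : ℝ) ^ 2) ≤ 4 * N * (1 / (N + n) - 1 / (N + (n + 1 : ℕ))) := by
    intro n
    have hn : (0 : ℝ) ≤ n := n.cast_nonneg
    have e : 4 * N * (1 / (N + n) - 1 / (N + (n + 1 : ℕ))) = 4 * N / ((N + n) * (N + n + 1)) := by
      push_cast
      field_simp
      ring
    rw [e, div_le_div_iff₀ (by positivity) (by positivity)]
    have : (N + n) * (N + n + 1) ≤ 4 * (N ^ 2 + (n : ℝ) ^ 2) := by
      nlinarith [sq_nonneg (N - n)]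
    nlinarith
  have hps : ∀ J : ℕ, ∑ n ∈ Finset.range J, N / (N ^ 2 + (n : ℝ) ^ 2) ≤ 4 := by
    intro J
    refine (Finset.sum_le_sum fun n _ => hb n).trans ?_
    rw [← Finset.mul_sum, Finset.sum_range_sub' (fun n : ℕ => 1 / (N + n))]
    have : 0 ≤ 1 / (N + (J : ℝ)) := by positivity
    have h2 : 4 * N * (1 / (N + (0 : ℕ))) = 4 := by
      field_simp
      simp
    rw [mul_sub, h2]
    nlinarith
  have hs : Summable (fun n : ℕ => N / (N ^ 2 + (n : ℝ) ^ 2)) :=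
    summable_of_sum_range_le (fun n => by positivity) hps
  have hle : ∑' n : ℕ, N / (N ^ 2 + (n : ℝ) ^ 2) ≤ 4 :=
    Real.tsum_le_of_sum_range_le (fun n => by positivity) hps
  have hs1 : Summable (fun n : ℕ => N / (N ^ 2 + ((n + 1 : ℕ) : ℝ) ^ 2)) := (summable_nat_add_iff 1).2 hs
  have hle1 : ∑' n : ℕ, N / (N ^ 2 + ((n + 1 : ℕ) : ℝ) ^ 2) ≤ 4 := by
    refine le_trans (hs1.tsum_le_tsum (fun n => ?_) hs) hle
    push_cast
    gcongr
    linarith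
  have ha : Summable (fun n : ℕ => N / (N ^ 2 + (((n : ℤ)) : ℝ) ^ 2)) := by simpa using hs
  have hb' : (fun n : ℕ => N / (N ^ 2 + (((-((n : ℤ) + 1) : ℤ)) : ℝ) ^ 2)) = (fun n : ℕ => N / (N ^ 2 + ((n + 1 : ℕ) : ℝ) ^ 2)) := by
    ext n
    push_cast
    rw [neg_sq]
  have hb2 : Summable (fun n : ℕ => N / (N ^ 2 + (((-((n : ℤ) + 1) : ℤ)) : ℝ) ^ 2)) := by
    rw [hb']; exact hs1
  have := (ha.hasSum.of_nat_of_neg_add_one (f := fun m : ℤ => N / (N ^ 2 + (m : ℝ) ^ 2)) hb2.hasSum)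
  refine ⟨this.summable, ?_⟩
  rw [this.tsum_eq, hb']
  have h3 : ∑' n : ℕ, N / (N ^ 2 + (((n : ℤ)) : ℝ) ^ 2) ≤ 4 := by simpa using hle
  linarith

lemma sum_rho (A : ℝ) (hA : 2 ≤ A) (m : ℝ) (hm : 0 < m) (J : ℕ) :
    ∑ j ∈ Finset.range J, min (m / A ^ (j + 1)) (A ^ (j + 1) / m) ≤ 6 := by
  have hb : ∀ j : ℕ, min (m / A ^ (j + 1)) (A ^ (j + 1) / m) ≤
      6 * (A ^ (j + 1 + 1) / (m + A ^ (j + 1 + 1)) - A ^ (j + 1) / (m + A ^ (j + 1))) := by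
    intro j
    have hp : 0 < A ^ (j + 1) := by positivity
    rw [pow_succ A (j + 1)]
    set a := A ^ (j + 1)
    have e : 6 * (a * A / (m + a * A) - a / (m + a)) = 6 * (m * a * (A - 1)) / ((m + a * A) * (m + a)) := by
      have : m + a * A ≠ 0 := by positivity
      field_simp
      ring
    rw [e]
    rcases le_total m a with h | h
    · refine (min_le_left _ _).trans ?_
      rw [div_le_div_iff₀ hp (by positivity)]
      have h1 : (m + a * A) * (m + a) ≤ (a * (1 + A)) * (2 * a) := by
        apply mul_le_mul <;> nlinarith
      have h2 : (1 + A) ≤ 3 * (A - 1) := by linarith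
      have h3 : (a * (1 + A)) * (2 * a) ≤ 6 * a * a * (A - 1) := by
        nlinarith [mul_pos hp hp]
      nlinarith
    · refine (min_le_right _ _).trans ?_
      rw [div_le_div_iff₀ hm (by positivity)]
      have h1 : (m + a * A) * (m + a) ≤ (m * (1 + A)) * (2 * m) := by
        apply mul_le_mul <;> nlinarith
      have h3 : (m * (1 + A)) * (2 * m) ≤ 6 * m * m * (A - 1) := by
        nlinarith [mul_pos hm hm]
      nlinarith
  refine (Finset.sum_le_sum fun j _ => hb j).trans ?_
  rw [← Finset.mul_sum, Finset.sum_range_sub (fun j : ℕ => A ^ (j + 1) / (m + A ^ (j + 1)))]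
  have h1 : A ^ (J + 1) / (m + A ^ (J + 1)) ≤ 1 := by
    rw [div_le_one (by positivity)]; linarith
  have h2 : 0 ≤ A ^ (0 + 1) / (m + A ^ (0 + 1)) := by positivity
  linarith

instance : IsProbabilityMeasure hm := by unfold hm; infer_instance

lemma fc_sum {ι : Type*} (s : Finset ι) (c : ι → ℝ) (F : ι → UnitAddCircle → ℝ) (hF : ∀ i, Continuous (F i))
    (n : ℤ) : fc (fun x => ∑ i ∈ s, c i * F i x) n = ∑ i ∈ s, (c i : ℂ) * fc (F i) n := by
  unfold fc
  have : (fun x : UnitAddCircle => ((∑ i ∈ s, c i * F i x : ℝ) : ℂ)) =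
      fun x => ∑ i ∈ s, (fun i x => (c i : ℂ) * (F i x : ℂ)) i x := by
    ext x; push_cast; rfl
  rw [this]
  have h := fourierCoeff.sum (T := 1) s (fun i x => (c i : ℂ) * (F i x : ℂ)) (fun i hi => by
    apply Continuous.integrable_of_hasCompactSupport
    · have := hF i
      fun_prop
    · exact HasCompactSupport.of_compactSpace _)
  have h' := congrFun h n
  rw [Finset.sum_apply] at h'
  have e : (fun x : UnitAddCircle => ∑ i ∈ s, (fun i x => (c i : ℂ) * (F i x : ℂ)) i x) =
      ∑ i ∈ s, (fun x : UnitAddCircle => (c i : ℂ) * (F i x : ℂ)) := by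
    ext x; rw [Finset.sum_apply]
  rw [e, h']
  refine Finset.sum_congr rfl fun i _ => ?_
  rw [fourierCoeff.const_mul]

lemma exists_phi (lam : ℕ → ℝ) (hlam : ∀ n, 1 ≤ lam n) (C0 : ℝ) (hC0 : 1 ≤ C0) (M : ℕ)
    (h : ∀ n k : ℕ, 1 ≤ n → n ≤ k →
      lam k ≤ C0 * ((k : ℝ) / n) ^ M * lam n ∧ lam n ≤ C0 * ((k : ℝ) / n) ^ M * lam k)
    (hdiv : ¬ Summable (fun n : ℕ => 1 / lam (n + 1))) :
    ∃ B : ℝ, 0 < B ∧ ∀ s : ℝ, 0 < s → ∃ φ : UnitAddCircle → ℝ, Continuous φ ∧ (∀ x, φ x ≤ 1) ∧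
      (∀ x, -s ≤ φ x) ∧ (∃ r : ℝ, 0 < r ∧ ∀ x, ‖x‖ ≤ r → φ x = 1) ∧
      (∀ m, ‖fc φ m‖ * lam m.natAbs ≤ s) ∧ Summable (fun m => ‖fc φ m‖) ∧ ∑' m, ‖fc φ m‖ ≤ B := by
  have hpos : ∀ n, 0 < lam n := fun n => lt_of_lt_of_le one_pos (hlam n)
  obtain ⟨g, hg, B1, hB1, hb1⟩ := exists_bmp (M + 1)
  obtain ⟨B2, hB2, hb2⟩ := hg.decay (M + 1)
  obtain ⟨B3, hB3, hb3⟩ := hg.decay 0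
  obtain ⟨B4, hB4, hb4⟩ := hg.decay 2
  obtain ⟨R, hR, hsupp⟩ := hg.supp
  obtain ⟨r, hr, hone⟩ := hg.one
  obtain ⟨A, hA⟩ := exists_nat_gt (max 2 (max (2 * R) (R / r)))
  have hA2 : (2 : ℝ) < A := (le_max_left _ _).trans_lt hA
  have hAR : 2 * R < A := ((le_max_left _ _).trans (le_max_right _ _)).trans_lt hA
  have hAr : R / r < A := ((le_max_right _ _).trans (le_max_right _ _)).trans_lt hA
  have hArr : R < A * r := by rwa [div_lt_iff₀ hr] at hAr
  have hA2' : 2 ≤ A := by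
    have : 2 < A := by exact_mod_cast hA2
    omega
  have hN1 : ∀ j : ℕ, (A : ℝ) ≤ (A : ℝ) ^ (j + 1) := fun j =>
    le_self_pow₀ (by linarith) (by omega)
  set F : ℕ → UnitAddCircle → ℝ := fun j => cb g ((A : ℝ) ^ (j + 1)) with hF
  have hFc : ∀ j, Continuous (F j) := fun j => cb_cont hg _
  have hfc : ∀ j m, fc (F j) m = (((A : ℝ) ^ (j + 1) : ℝ) : ℂ)⁻¹ * ft g (m / (A : ℝ) ^ (j + 1)) := fun j m =>
    fc_cb hg R hsupp _ (by have := hN1 j; linarith) (by have := hN1 j; linarith) m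
  have hfcn : ∀ j m, ‖fc (F j) m‖ = ((A : ℝ) ^ (j + 1))⁻¹ * ‖ft g (m / (A : ℝ) ^ (j + 1))‖ := by
    intro j m
    rw [hfc, norm_mul, norm_inv, Complex.norm_real, Real.norm_eq_abs, abs_of_pos (by positivity)]
  -- l1 bound
  have hl1 : ∀ j m, ‖fc (F j) m‖ ≤ (B3 + B4) * ((A : ℝ) ^ (j + 1) / (((A : ℝ) ^ (j + 1)) ^ 2 + (m : ℝ) ^ 2)) := by
    intro j m
    rw [hfcn]
    have hN : 0 < (A : ℝ) ^ (j + 1) := by positivity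
    set N := (A : ℝ) ^ (j + 1)
    have h3 := hb3 (m / N)
    have h4 := hb4 (m / N)
    rw [pow_zero, one_mul] at h3
    rw [sq_abs] at h4
    have e : N / (N ^ 2 + (m : ℝ) ^ 2) = N⁻¹ * (1 / (1 + (m / N) ^ 2)) := by
      field_simp
    rw [e, mul_left_comm]
    gcongr
    rw [mul_one_div, le_div_iff₀ (by positivity)]
    nlinarith
  -- weighted bound
  have hw : ∀ j, ∀ m : ℤ, m ≠ 0 → min 1 ((A : ℝ) ^ (j + 1) / lam (A ^ (j + 1))) * (‖fc (F j) m‖ * lam m.natAbs) ≤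
      (B1 + B2) * C0 * min (|(m : ℝ)| / (A : ℝ) ^ (j + 1)) ((A : ℝ) ^ (j + 1) / |(m : ℝ)|) := by
    intro j m hm
    rw [hfcn]
    have hN : 0 < (A : ℝ) ^ (j + 1) := by positivity
    have hmp : 0 < |(m : ℝ)| := by positivity
    have hmn : ((m.natAbs : ℕ) : ℝ) = |(m : ℝ)| := by simp
    have hm1 : 1 ≤ m.natAbs := by omega
    have hA1 : 1 ≤ A ^ (j + 1) := Nat.one_le_pow _ _ (by omega)
    have hcast : ((A ^ (j + 1) : ℕ) : ℝ) = (A : ℝ) ^ (j + 1) := by push_cast; rfl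
    set L := lam (A ^ (j + 1))
    have hL : 0 < L := hpos _
    have main : ∃ t : ℝ, 0 < t ∧ t = min (|(m : ℝ)| / (A : ℝ) ^ (j + 1)) ((A : ℝ) ^ (j + 1) / |(m : ℝ)|) ∧
        ‖ft g (m / (A : ℝ) ^ (j + 1))‖ ≤ (B1 + B2) * t ^ (M + 1) ∧ lam m.natAbs ≤ C0 * (t⁻¹) ^ M * L := by
      refine ⟨_, by positivity, rfl, ?_⟩
      set N := (A : ℝ) ^ (j + 1)
      have habs : |(m : ℝ) / N| = |(m : ℝ)| / N := by rw [abs_div, abs_of_pos hN]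
      rcases le_total (|(m : ℝ)|) N with hle | hle
      · have h1 : |(m : ℝ)| / N ≤ 1 := by rwa [div_le_one hN]
        have h2 : 1 ≤ N / |(m : ℝ)| := by rwa [one_le_div hmp]
        rw [min_eq_left (h1.trans h2)]
        constructor
        · refine (hb1 _).trans ?_
          rw [habs]
          exact mul_le_mul (by linarith) (pow_le_pow_of_le_one (by positivity) h1 (by omega))
            (by positivity) (by positivity)
        · have := (h m.natAbs (A ^ (j + 1)) hm1 (by
            rw [← hmn] at hle; rw [← hcast] at hle; exact_mod_cast hle)).2
          rw [hmn, hcast] at this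
          rwa [inv_div]
      · have h1 : 1 ≤ |(m : ℝ)| / N := by rwa [one_le_div hN]
        have h2 : N / |(m : ℝ)| ≤ 1 := by rwa [div_le_one hmp]
        rw [min_eq_right (h2.trans h1)]
        constructor
        · have := hb2 (m / N)
          rw [habs] at this
          rw [← inv_div (|(m : ℝ)|) N, inv_pow, ← div_eq_mul_inv, le_div_iff₀ (by positivity)]
          linarith
        · have := (h (A ^ (j + 1)) m.natAbs hA1 (by
            rw [← hmn] at hle; rw [← hcast] at hle; exact_mod_cast hle)).1
          rw [hmn, hcast] at this
          rwa [inv_div]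
    obtain ⟨t, ht, hte, hft, hlm⟩ := main
    rw [← hte]
    set N := (A : ℝ) ^ (j + 1)
    have := hpos m.natAbs
    calc _ ≤ N / L * (N⁻¹ * ((B1 + B2) * t ^ (M + 1)) * (C0 * (t⁻¹) ^ M * L)) := by
          gcongr
          exact min_le_right _ _
      _ = _ := by
          rw [pow_succ, inv_pow]
          field_simp
  -- zero coefficient
  have hz : ∀ j, fc (F j) 0 = 0 := by
    intro j
    rw [hfc]
    have := hb1 0
    simp at this
    simp [this]
  refine ⟨(B3 + B4) * 8, by positivity, fun s hs => ?_⟩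
  set u : ℕ → ℝ := fun j => min 1 ((A : ℝ) ^ (j + 1) / lam (A ^ (j + 1))) with hu
  have hu0 : ∀ j, 0 < u j := fun j => by have := hpos (A ^ (j + 1)); positivity
  have hu1 : ∀ j, u j ≤ 1 := fun j => min_le_left _ _
  have hns : ¬ Summable u := by
    have := lam_cond lam hlam C0 hC0 M h hdiv A hA2'
    rwa [← summable_nat_add_iff 1] at this
  have htend := (not_summable_iff_tendsto_nat_atTop_of_nonneg (fun j => (hu0 j).le)).1 hns
  obtain ⟨J, hJ⟩ := (htend.eventually (eventually_ge_atTop (max (1 / s) (6 * ((B1 + B2) * C0) / s)))).exists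
  set S := ∑ i ∈ Finset.range J, u i with hS
  have hS1 : 1 / s ≤ S := (le_max_left _ _).trans hJ
  have hS2 : 6 * ((B1 + B2) * C0) / s ≤ S := (le_max_right _ _).trans hJ
  have hS0 : 0 < S := lt_of_lt_of_le (by positivity) hS1
  have hS1' : 1 / S ≤ s := by
    rw [div_le_iff₀ hs] at hS1
    rw [div_le_iff₀ hS0]; linarith
  have hS2' : 6 * ((B1 + B2) * C0) / S ≤ s := by
    rw [div_le_iff₀ hs] at hS2
    rw [div_le_iff₀ hS0]; linarith
  set c : ℕ → ℝ := fun j => u j / S with hc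
  have hc0 : ∀ j, 0 < c j := fun j => div_pos (hu0 j) hS0
  have hc1 : ∀ j, c j ≤ s := fun j => le_trans (by simp only [hc]; gcongr; exact hu1 j) hS1'
  have hcs : ∑ j ∈ Finset.range J, c j = 1 := by
    simp only [hc]
    rw [← Finset.sum_div, ← hS, div_self hS0.ne']
  have hfcφ := fc_sum (Finset.range J) c F hFc
  have hnφ : ∀ m, ‖fc (fun x => ∑ j ∈ Finset.range J, c j * F j x) m‖ ≤ ∑ j ∈ Finset.range J, c j * ‖fc (F j) m‖ := by
    intro m
    rw [hfcφ]
    refine (norm_sum_le _ _).trans (Finset.sum_le_sum fun j _ => ?_)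
    rw [norm_mul, Complex.norm_real, Real.norm_eq_abs, abs_of_pos (hc0 j)]
  have hPs : ∀ j, Summable (fun m => ‖fc (F j) m‖) ∧ ∑' m, ‖fc (F j) m‖ ≤ (B3 + B4) * 8 := by
    intro j
    obtain ⟨p1, p2⟩ := sum_poisson ((A : ℝ) ^ (j + 1)) (by have := hN1 j; linarith)
    have p3 := Summable.of_nonneg_of_le (fun m => norm_nonneg _) (hl1 j) (p1.mul_left (B3 + B4))
    refine ⟨p3, ?_⟩
    refine (p3.tsum_le_tsum (hl1 j) (p1.mul_left (B3 + B4))).trans ?_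
    rw [tsum_mul_left]
    gcongr
  have hsum : Summable (fun m => ∑ j ∈ Finset.range J, c j * ‖fc (F j) m‖) :=
    summable_sum fun j _ => (hPs j).1.mul_left _
  have hsφ : Summable (fun m => ‖fc (fun x => ∑ j ∈ Finset.range J, c j * F j x) m‖) :=
    Summable.of_nonneg_of_le (fun m => norm_nonneg _) hnφ hsum
  refine ⟨fun x => ∑ j ∈ Finset.range J, c j * F j x, by fun_prop, ?_, ?_, ?_, ?_, hsφ, ?_⟩
  · intro x
    rw [← hcs]
    refine Finset.sum_le_sum fun j _ => ?_
    have := (abs_le.1 (hg.le ((A : ℝ) ^ (j + 1) * ‖x‖))).2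
    exact mul_le_of_le_one_right (hc0 j).le this
  · intro x
    by_cases hall : ∀ j ∈ Finset.range J, 0 ≤ F j x
    · have : 0 ≤ ∑ j ∈ Finset.range J, c j * F j x :=
        Finset.sum_nonneg fun j hj => mul_nonneg (hc0 j).le (hall j hj)
      linarith
    · push Not at hall
      obtain ⟨i, hi, hneg⟩ := hall
      have hrr : r < (A : ℝ) ^ (i + 1) * ‖x‖ := by
        by_contra hcon
        push Not at hcon
        have : F i x = 1 := hone _ (by rwa [abs_of_nonneg (by positivity)])
        linarith
      have hRR : (A : ℝ) ^ (i + 1) * ‖x‖ < R := by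
        by_contra hcon
        push Not at hcon
        have : F i x = 0 := hsupp _ (by rwa [abs_of_nonneg (by positivity)])
        linarith
      have hother : ∀ j ∈ (Finset.range J).erase i, 0 ≤ c j * F j x := by
        intro j hj
        have hji := Finset.ne_of_mem_erase hj
        apply mul_nonneg (hc0 j).le
        rcases lt_or_gt_of_ne hji with hlt | hgt
        · have : F j x = 1 := by
            apply hone
            rw [abs_of_nonneg (by positivity)]
            have h1 : (A : ℝ) ^ (j + 1) * A ≤ (A : ℝ) ^ (i + 1) := by
              rw [← pow_succ]
              exact pow_le_pow_right₀ (by linarith) (by omega)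
            have h2 : ((A : ℝ) ^ (j + 1) * ‖x‖) * A ≤ r * A := by
              have := mul_le_mul_of_nonneg_right h1 (norm_nonneg x)
              linarith
            exact le_of_mul_le_mul_right h2 (by linarith)
          rw [this]; exact zero_le_one
        · have : F j x = 0 := by
            apply hsupp
            rw [abs_of_nonneg (by positivity)]
            have h1 : (A : ℝ) ^ (i + 1) * A ≤ (A : ℝ) ^ (j + 1) := by
              rw [← pow_succ]
              exact pow_le_pow_right₀ (by linarith) (by omega)
            have := mul_le_mul_of_nonneg_right h1 (norm_nonneg x)
            nlinarith
          rw [this]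
      show -s ≤ ∑ j ∈ Finset.range J, c j * F j x
      rw [← Finset.add_sum_erase _ _ hi]
      have h1 := Finset.sum_nonneg hother
      have h2 := (abs_le.1 (hg.le ((A : ℝ) ^ (i + 1) * ‖x‖))).1
      have h3 : -1 ≤ F i x := h2
      have h4 := hc1 i
      have h5 := hc0 i
      nlinarith
  · refine ⟨r / (A : ℝ) ^ J, by positivity, fun x hx => ?_⟩
    show ∑ j ∈ Finset.range J, c j * F j x = 1
    rw [← hcs]
    refine Finset.sum_congr rfl fun j hj => ?_
    have : F j x = 1 := by
      apply hone
      rw [abs_of_nonneg (by positivity)]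
      rw [le_div_iff₀ (by positivity)] at hx
      have h1 : (A : ℝ) ^ (j + 1) ≤ (A : ℝ) ^ J :=
        pow_le_pow_right₀ (by linarith) (by have := Finset.mem_range.1 hj; omega)
      have := mul_le_mul_of_nonneg_right h1 (norm_nonneg x)
      linarith
    rw [this, mul_one]
  · intro m
    rcases eq_or_ne m 0 with rfl | hm
    · rw [hfcφ]
      simp [hz, hs.le]
    · have hm' : 0 < |(m : ℝ)| := by positivity
      have hl := hpos m.natAbs
      calc _ ≤ (∑ j ∈ Finset.range J, c j * ‖fc (F j) m‖) * lam m.natAbs := by gcongr; exact hnφ m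
        _ = (∑ j ∈ Finset.range J, u j * (‖fc (F j) m‖ * lam m.natAbs)) / S := by
            rw [Finset.sum_mul, Finset.sum_div]
            refine Finset.sum_congr rfl fun j _ => ?_
            simp only [hc]; ring
        _ ≤ (∑ j ∈ Finset.range J, (B1 + B2) * C0 * min (|(m : ℝ)| / (A : ℝ) ^ (j + 1)) ((A : ℝ) ^ (j + 1) / |(m : ℝ)|)) / S := by
            refine div_le_div_of_nonneg_right (Finset.sum_le_sum fun j _ => hw j m hm) hS0.le
        _ ≤ ((B1 + B2) * C0 * 6) / S := by
            rw [← Finset.mul_sum]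
            gcongr
            exact sum_rho A hA2.le _ hm' J
        _ ≤ s := by
            refine le_trans (le_of_eq ?_) hS2'
            ring
  · calc _ ≤ ∑' m, ∑ j ∈ Finset.range J, c j * ‖fc (F j) m‖ := hsφ.tsum_le_tsum hnφ hsum
      _ = ∑ j ∈ Finset.range J, c j * ∑' m, ‖fc (F j) m‖ := by
          rw [Summable.tsum_finsetSum (fun j _ => (hPs j).1.mul_left _)]
          simp_rw [tsum_mul_left]
      _ ≤ ∑ j ∈ Finset.range J, c j * ((B3 + B4) * 8) := by
          gcongr with j hj
          · exact (hc0 j).le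
          · exact (hPs j).2
      _ = _ := by rw [← Finset.sum_mul, hcs, one_mul]

lemma norm_fourier_apply (n : ℤ) (x : UnitAddCircle) : ‖(fourier n x : ℂ)‖ = 1 := by
  rw [fourier_apply, Circle.norm_coe]

lemma ser_mul (a : ℤ → ℂ) (ha : Summable (fun k => ‖a k‖)) (F G : UnitAddCircle → ℂ)
    (hF : ∀ x, HasSum (fun k => a k * fourier k x) (F x)) (hG : Integrable G hm) (n : ℤ) :
    fourierCoeff (fun x => F x * G x) n = ∑' k, a k * fourierCoeff G (n - k) := by
  have e : ∀ k, a k * fourierCoeff G (n - k) = ∫ x, a k * ((fourier (-(n - k)) x : ℂ) * G x) ∂hm := by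
    intro k
    rw [integral_const_mul]
    rfl
  have hint : ∀ k, Integrable (fun x => a k * ((fourier (-(n - k)) x : ℂ) * G x)) hm := by
    intro k
    refine (hG.bdd_mul (c := 1) ?_ ?_).const_mul _
    · exact (map_continuous (fourier (-(n - k)))).aestronglyMeasurable
    · exact Eventually.of_forall fun x => (norm_fourier_apply _ x).le
  have hnorm : Summable fun k => ∫ x, ‖a k * ((fourier (-(n - k)) x : ℂ) * G x)‖ ∂hm := by
    simp_rw [norm_mul, norm_fourier_apply, one_mul, integral_const_mul]
    exact ha.mul_right _
  have := hasSum_integral_of_summable_integral_norm hint hnorm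
  simp_rw [e]
  rw [this.tsum_eq]
  show ∫ x, (fourier (-n) x : ℂ) • (F x * G x) ∂hm = _
  congr 1
  ext x
  have h1 := ((hF x).mul_right (G x)).mul_left (fourier (-n) x : ℂ)
  rw [smul_eq_mul, ← h1.tsum_eq]
  congr 1
  ext k
  rw [show -(n - k) = -n + k by ring, fourier_add]
  ring

lemma ser_coeff (a : ℤ → ℂ) (ha : Summable (fun k => ‖a k‖)) (F : UnitAddCircle → ℂ)
    (hF : ∀ x, HasSum (fun k => a k * fourier k x) (F x)) (n : ℤ) :
    fourierCoeff F n = a n := by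
  have h := ser_mul a ha F (fun _ => 1) hF (integrable_const _) n
  simp only [mul_one] at h
  rw [h]
  have h0 := fourierCoeff_fourier (T := 1) 0
  have h1 : (fourier 0 : UnitAddCircle → ℂ) = fun _ => 1 := by
    ext x; exact fourier_zero
  rw [h1] at h0
  have h0' : fourierCoeff (T := 1) (fun _ : UnitAddCircle => (1 : ℂ)) = Pi.single 0 1 := h0
  rw [tsum_eq_single n]
  · rw [h0']; simp
  · intro k hk
    rw [h0', Pi.single_eq_of_ne (by rw [sub_ne_zero]; exact hk.symm)]
    simp

lemma conv_ser (f ρ : UnitAddCircle → ℝ) (hf : Integrable f hm) (hρ : Continuous ρ)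
    (hs : Summable (fun k => ‖fc ρ k‖)) (x : UnitAddCircle) :
    HasSum (fun k => (fc f k * fc ρ k) * fourier k x) ((∫ y, f y * ρ (x - y) ∂hm : ℝ) : ℂ) := by
  have hser : ∀ z, HasSum (fun k => fc ρ k * fourier k z) (ρ z : ℂ) := by
    intro z
    have := has_pointwise_sum_fourier_series_of_summable (T := 1)
      (f := (⟨fun x => (ρ x : ℂ), by fun_prop⟩ : C(UnitAddCircle, ℂ))) (Summable.of_norm hs) z
    exact this
  have hint : ∀ k, Integrable (fun y => (fc ρ k * fourier k x) * ((fourier (-k) y : ℂ) * (f y : ℂ))) hm := by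
    intro k
    refine (hf.ofReal.bdd_mul (c := 1) ?_ ?_).const_mul _
    · exact (map_continuous (fourier (-k))).aestronglyMeasurable
    · exact Eventually.of_forall fun x => (norm_fourier_apply _ x).le
  have hnorm : Summable fun k => ∫ y, ‖(fc ρ k * fourier k x) * ((fourier (-k) y : ℂ) * (f y : ℂ))‖ ∂hm := by
    simp_rw [norm_mul, norm_fourier_apply, one_mul, mul_one, integral_const_mul]
    exact hs.mul_right _
  have := hasSum_integral_of_summable_integral_norm hint hnorm
  have e1 : (fun k => (fc f k * fc ρ k) * fourier k x) = fun k => ∫ y, (fc ρ k * fourier k x) * ((fourier (-k) y : ℂ) * (f y : ℂ)) ∂hm := by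
    ext k
    rw [integral_const_mul]
    have : fc f k = ∫ y, (fourier (-k) y : ℂ) * (f y : ℂ) ∂hm := rfl
    rw [← this]; ring
  have e2 : ((∫ y, f y * ρ (x - y) ∂hm : ℝ) : ℂ) = ∫ y, ∑' k, (fc ρ k * fourier k x) * ((fourier (-k) y : ℂ) * (f y : ℂ)) ∂hm := by
    rw [← integral_complex_ofReal]
    congr 1
    ext y
    have h1 := (hser (x - y)).mul_right (f y : ℂ)
    push_cast
    rw [mul_comm, ← h1.tsum_eq]
    congr 1
    ext k
    have : (fourier k (x - y) : ℂ) = fourier k x * fourier (-k) y := by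
      simp only [fourier_apply, sub_eq_add_neg, smul_add, AddCircle.toCircle_add, Circle.coe_mul]
      simp
    rw [this]; ring
  rw [e1, e2]
  exact this

lemma fc_translate (φ : UnitAddCircle → ℝ) (x0 : UnitAddCircle) (n : ℤ) :
    ‖fc (fun x => φ (x - x0)) n‖ = ‖fc φ n‖ := by
  have : fc (fun x => φ (x - x0)) n = fourier (-n) x0 * fc φ n := by
    have e1 : fc (fun x => φ (x - x0)) n = ∫ x, (fourier (-n) x : ℂ) * (φ (x - x0) : ℂ) ∂AddCircle.haarAddCircle := rfl
    have e2 : fc φ n = ∫ x, (fourier (-n) x : ℂ) * (φ x : ℂ) ∂AddCircle.haarAddCircle := rfl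
    rw [e1, e2, ← integral_const_mul, ← integral_sub_right_eq_self (fun x => (fourier (-n) x0 : ℂ) * ((fourier (-n) x : ℂ) * (φ x : ℂ))) x0]
    congr 1
    ext x
    have : (fourier (-n) x : ℂ) = fourier (-n) x0 * fourier (-n) (x - x0) := by
      rw [fourier_apply, fourier_apply, fourier_apply, ← Circle.coe_mul, ← AddCircle.toCircle_add, ← smul_add]
      simp
    rw [this]; ring
  rw [this, norm_mul, norm_fourier_apply, one_mul]

lemma exists_moll (M : ℕ) : ∃ ρ : ℕ → UnitAddCircle → ℝ, (∀ N, Continuous (ρ N)) ∧ (∀ N x, 0 ≤ ρ N x) ∧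
    (∀ N k, ‖fc (ρ N) k‖ ≤ 1) ∧ (∀ N, fc (ρ N) 0 = 1) ∧
    (∀ k, Tendsto (fun N => fc (ρ N) k) atTop (𝓝 1)) ∧
    (∀ N, Summable (fun k : ℤ => ‖fc (ρ N) k‖ * (1 + |(k : ℝ)|) ^ M)) ∧
    (∀ ε : ℝ, 0 < ε → ∀ᶠ N in atTop, ∀ x, ε ≤ ‖x‖ → ρ N x = 0) := by
  obtain ⟨g, hg, hg0⟩ := exists_bmp0
  obtain ⟨R, hR, hsupp⟩ := hg.supp
  obtain ⟨r, hr, hone⟩ := hg.one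
  obtain ⟨N0, hN0⟩ := exists_nat_gt (2 * R)
  have hN0' : (0 : ℝ) < N0 := by linarith
  set I : ℝ := ∫ x, g x with hI
  have hI0 : 0 < I := hg.smooth.continuous.integral_pos_of_hasCompactSupport_nonneg_nonzero (x := 0) hg.hcs hg0
    (by rw [hone 0 (by simpa using hr.le)]; norm_num)
  have hft0 : ft g 0 = (I : ℂ) := by
    unfold ft
    simp only [Complex.ofReal_zero, mul_zero, Complex.exp_zero, one_mul]
    rw [integral_complex_ofReal]
  have hfti : ∀ ξ, ‖ft g ξ‖ ≤ I := by
    intro ξ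
    refine (norm_integral_le_integral_norm _).trans (le_of_eq ?_)
    rw [hI]
    congr 1
    ext x
    rw [norm_mul, show (-2 * Real.pi * Complex.I * x * ξ : ℂ) = ((-2 * Real.pi * x * ξ : ℝ) : ℂ) * Complex.I by
      push_cast; ring, Complex.norm_exp_ofReal_mul_I, one_mul, Complex.norm_real, Real.norm_eq_abs, abs_of_nonneg (hg0 x)]
  set S : ℕ → ℝ := fun N => (N : ℝ) + N0 with hS
  have hSp : ∀ N, 0 < S N := fun N => by simp only [hS]; positivity
  have hSR : ∀ N, 2 * R ≤ S N := fun N => by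
    simp only [hS]
    have : (0 : ℝ) ≤ N := N.cast_nonneg
    linarith
  have hfc : ∀ N k, fc (fun x => S N / I * cb g (S N) x) k = (I : ℂ)⁻¹ * ft g (k / S N) := by
    intro N k
    have h1 := fc_sum {()} (fun _ => S N / I) (fun _ => cb g (S N)) (fun _ => cb_cont hg _) k
    simp only [Finset.sum_singleton] at h1
    rw [h1, fc_cb hg R hsupp _ (hSp N) (hSR N)]
    have : (S N : ℂ) ≠ 0 := by exact_mod_cast (hSp N).ne'
    push_cast
    field_simp
  have hSt : Tendsto S atTop atTop := tendsto_atTop_add_const_right _ _ tendsto_natCast_atTop_atTop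
  refine ⟨fun N x => S N / I * cb g (S N) x, ?_, ?_, ?_, ?_, ?_, ?_, ?_⟩
  · intro N
    have := cb_cont hg (S N)
    fun_prop
  · intro N x
    have := hg0 (S N * ‖x‖)
    have := hSp N
    unfold cb
    positivity
  · intro N k
    rw [hfc, norm_mul, norm_inv, Complex.norm_real, Real.norm_eq_abs, abs_of_pos hI0, inv_mul_le_iff₀ hI0, mul_one]
    exact hfti _
  · intro N
    rw [hfc]
    simp only [Int.cast_zero, zero_div]
    rw [hft0, inv_mul_cancel₀]
    exact_mod_cast hI0.ne'
  · intro k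
    simp_rw [hfc]
    have h1 : Tendsto (fun N => (k : ℝ) / S N) atTop (𝓝 0) := hSt.const_div_atTop _
    have h2 := (hg.cont.tendsto 0).comp h1
    rw [hft0] at h2
    have h3 := h2.const_mul (I : ℂ)⁻¹
    rw [inv_mul_cancel₀ (by exact_mod_cast hI0.ne')] at h3
    exact h3
  · intro N
    obtain ⟨B, hB, hb⟩ := hg.decay (M + 2)
    have hb0 := hfti
    have hp := (sum_poisson 1 le_rfl).1
    refine Summable.of_nonneg_of_le (fun k => by positivity) (fun k => ?_)
      (hp.mul_left (I⁻¹ * (2 ^ (M + 2) * (I + (S N) ^ (M + 2) * B))))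
    rw [hfc, norm_mul, norm_inv, Complex.norm_real, Real.norm_eq_abs, abs_of_pos hI0]
    have hk0 : 0 ≤ |(k : ℝ)| := abs_nonneg _
    have h1 : (1 + |(k : ℝ)|) ^ (M + 2) ≤ 2 ^ (M + 2) * (1 + |(k : ℝ)| ^ (M + 2)) := by
      rcases le_total (|(k : ℝ)|) 1 with h | h
      · calc _ ≤ (2 : ℝ) ^ (M + 2) := by gcongr; linarith
          _ ≤ _ := le_mul_of_one_le_right (by positivity) (by have := pow_nonneg hk0 (M + 2); linarith)
      · calc _ ≤ (2 * |(k : ℝ)|) ^ (M + 2) := by gcongr; linarith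
          _ = 2 ^ (M + 2) * |(k : ℝ)| ^ (M + 2) := by rw [mul_pow]
          _ ≤ _ := by gcongr; linarith
    have h2 : |(k : ℝ)| ^ (M + 2) * ‖ft g (k / S N)‖ ≤ (S N) ^ (M + 2) * B := by
      have := hb (k / S N)
      rw [abs_div, abs_of_pos (hSp N), div_pow, div_mul_eq_mul_div, div_le_iff₀ (pow_pos (hSp N) _)] at this
      linarith
    have h3 : (1 + |(k : ℝ)|) ^ (M + 2) * ‖ft g (k / S N)‖ ≤ 2 ^ (M + 2) * (I + (S N) ^ (M + 2) * B) := by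
      calc _ ≤ 2 ^ (M + 2) * (1 + |(k : ℝ)| ^ (M + 2)) * ‖ft g (k / S N)‖ := by gcongr
        _ = 2 ^ (M + 2) * (‖ft g (k / S N)‖ + |(k : ℝ)| ^ (M + 2) * ‖ft g (k / S N)‖) := by ring
        _ ≤ _ := by gcongr; exact hfti _
    rw [mul_assoc, mul_assoc]
    refine mul_le_mul_of_nonneg_left ?_ (by positivity)
    rw [one_pow, mul_one_div, le_div_iff₀ (by positivity)]
    refine le_trans ?_ h3
    have h4 : 1 + (k : ℝ) ^ 2 ≤ (1 + |(k : ℝ)|) ^ 2 := by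
      rw [← sq_abs (k : ℝ)]; nlinarith
    calc _ ≤ ‖ft g (k / S N)‖ * (1 + |(k : ℝ)|) ^ M * (1 + |(k : ℝ)|) ^ 2 := by gcongr
      _ = _ := by ring
  · intro ε hε
    filter_upwards [hSt.eventually (eventually_ge_atTop (R / ε))] with N hN x hx
    have : cb g (S N) x = 0 := by
      apply hsupp
      rw [abs_of_nonneg (by have := hSp N; positivity)]
      rw [div_le_iff₀ hε] at hN
      have := hSp N
      nlinarith
    simp [this]

lemma conv_bound (L : ℤ → ℝ) (hL : ∀ n, 0 ≤ L n) (W : ℤ → ℝ) (hW : ∀ n k, L n ≤ W k * L (n - k))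
    (a b : ℤ → ℂ) (ha : Summable (fun k => ‖a k‖)) (haW : Summable (fun k => ‖a k‖ * W k))
    (s B : ℝ) (hs : 0 ≤ s) (hW0 : ∀ k, 0 ≤ W k) (hb : ∀ m, ‖b m‖ * L m ≤ s) (hbs : Summable (fun m => ‖b m‖))
    (hB : ∑' m, ‖b m‖ ≤ B) :
    Summable (fun n => ‖∑' k, a k * b (n - k)‖ ^ 2 * L n) ∧
    ∑' n, ‖∑' k, a k * b (n - k)‖ ^ 2 * L n ≤ (∑' k, ‖a k‖ * W k) * (∑' k, ‖a k‖) * B * s := by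
  have hbB : ∀ m, ‖b m‖ ≤ B := fun m => (hbs.le_tsum m fun _ _ => norm_nonneg _).trans hB
  have hsum : ∀ n, Summable (fun k => ‖a k‖ * ‖b (n - k)‖) := fun n =>
    Summable.of_nonneg_of_le (fun k => by positivity) (fun k => by gcongr; exact hbB _) (ha.mul_right B)
  have hn : ∀ n, ‖∑' k, a k * b (n - k)‖ ≤ ∑' k, ‖a k‖ * ‖b (n - k)‖ := by
    intro n
    have := norm_tsum_le_tsum_norm (f := fun k => a k * b (n - k)) (by simpa only [norm_mul] using hsum n)
    simpa only [norm_mul] using this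
  have h1 : ∀ n, ‖∑' k, a k * b (n - k)‖ * L n ≤ (∑' k, ‖a k‖ * W k) * s := by
    intro n
    calc _ ≤ (∑' k, ‖a k‖ * ‖b (n - k)‖) * L n := by gcongr; exacts [hL n, hn n]
      _ = ∑' k, ‖a k‖ * ‖b (n - k)‖ * L n := by rw [tsum_mul_right]
      _ ≤ ∑' k, ‖a k‖ * W k * s := by
          refine Summable.tsum_le_tsum (fun k => ?_) ((hsum n).mul_right _) (haW.mul_right _)
          calc _ ≤ ‖a k‖ * ‖b (n - k)‖ * (W k * L (n - k)) := by gcongr; exact hW n k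
            _ = ‖a k‖ * W k * (‖b (n - k)‖ * L (n - k)) := by ring
            _ ≤ _ := mul_le_mul_of_nonneg_left (hb _) (mul_nonneg (norm_nonneg _) (hW0 k))
      _ = _ := by rw [tsum_mul_right]
  have h2 : ∀ T : Finset ℤ, ∑ n ∈ T, ‖∑' k, a k * b (n - k)‖ ≤ (∑' k, ‖a k‖) * B := by
    intro T
    calc _ ≤ ∑ n ∈ T, ∑' k, ‖a k‖ * ‖b (n - k)‖ := Finset.sum_le_sum fun n _ => hn n
      _ = ∑' k, ∑ n ∈ T, ‖a k‖ * ‖b (n - k)‖ := (Summable.tsum_finsetSum fun n _ => hsum n).symm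
      _ ≤ ∑' k, ‖a k‖ * B := by
          refine Summable.tsum_le_tsum (fun k => ?_) (summable_sum fun n _ => hsum n) (ha.mul_right _)
          rw [← Finset.mul_sum]
          gcongr
          have hsh : Summable (fun n => ‖b (n - k)‖) := (Equiv.subRight k).summable_iff.2 hbs
          calc _ ≤ ∑' n, ‖b (n - k)‖ := hsh.sum_le_tsum _ fun _ _ => norm_nonneg _
            _ = ∑' n, ‖b n‖ := (Equiv.subRight k).tsum_eq (fun n => ‖b n‖)
            _ ≤ B := hB
      _ = _ := by rw [tsum_mul_right]
  have hD : 0 ≤ (∑' k, ‖a k‖ * W k) := tsum_nonneg fun k => mul_nonneg (norm_nonneg _) (hW0 k)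
  have h3 : ∀ T : Finset ℤ, ∑ n ∈ T, ‖∑' k, a k * b (n - k)‖ ^ 2 * L n ≤ (∑' k, ‖a k‖ * W k) * (∑' k, ‖a k‖) * B * s := by
    intro T
    calc _ ≤ ∑ n ∈ T, ((∑' k, ‖a k‖ * W k) * s) * ‖∑' k, a k * b (n - k)‖ := by
          refine Finset.sum_le_sum fun n _ => ?_
          rw [sq, mul_right_comm]
          exact mul_le_mul_of_nonneg_right (h1 n) (norm_nonneg _)
      _ ≤ ((∑' k, ‖a k‖ * W k) * s) * ((∑' k, ‖a k‖) * B) := by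
          rw [← Finset.mul_sum]
          gcongr
          exact h2 T
      _ = _ := by ring
  have hnn : ∀ n, 0 ≤ ‖∑' k, a k * b (n - k)‖ ^ 2 * L n := fun n => mul_nonneg (by positivity) (hL n)
  have hsm := summable_of_sum_le hnn h3
  exact ⟨hsm, hsm.tsum_le_of_sum_le h3⟩

lemma ae_zero_off_support (f : UnitAddCircle → ℝ) : ∀ᵐ x ∂hm, x ∉ measSupport f → f x = 0 := by
  obtain ⟨T, hT1, hT2, hT3⟩ := TopologicalSpace.isOpen_sUnion_countable
    {U : Set UnitAddCircle | IsOpen U ∧ ∀ᵐ x ∂hm, x ∈ U → f x = 0} (fun U hU => hU.1)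
  have : ∀ᵐ x ∂hm, ∀ U ∈ T, x ∈ U → f x = 0 := (ae_ball_iff hT1).2 fun U hU => (hT2 hU).2
  filter_upwards [this] with x hx hxs
  unfold measSupport at hxs
  rw [Set.mem_compl_iff, not_not, ← hT3] at hxs
  obtain ⟨U, hU, hxU⟩ := hxs
  exact hx U hU hxU

lemma norm_fc_le (f : UnitAddCircle → ℝ) (n : ℤ) : ‖fc f n‖ ≤ ∫ x, ‖f x‖ ∂hm := by
  have e1 : fc f n = ∫ x, (fourier (-n) x : ℂ) * (f x : ℂ) ∂hm := rfl
  rw [e1]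
  refine (norm_integral_le_integral_norm _).trans (le_of_eq ?_)
  congr 1
  ext x
  rw [norm_mul, norm_fourier_apply, one_mul, Complex.norm_real]

lemma LPair.integrable {lam : ℕ → ℝ} (p : LPair lam) : Integrable p.f hm :=
  p.memLp.integrable (by norm_num)

lemma integral_eq_fc_zero (ρ : UnitAddCircle → ℝ) : ((∫ x, ρ x ∂hm : ℝ) : ℂ) = fc ρ 0 := by
  have e1 : fc ρ 0 = ∫ x, (fourier (-0) x : ℂ) * (ρ x : ℂ) ∂hm := rfl
  rw [e1, ← integral_complex_ofReal]
  simp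

lemma moll_approx {lam : ℕ → ℝ} (hlam : ∀ n, 1 ≤ lam n) (p : LPair lam) (M : ℕ) (ε τ : ℝ) (hε : 0 < ε) (hτ : 0 < τ) :
    ∃ (g : UnitAddCircle → ℝ) (a : ℤ → ℂ), Continuous g ∧ (∀ x, 0 ≤ g x) ∧ (∀ x, g x ≤ 2) ∧
      (∀ x, HasSum (fun k => a k * fourier k x) (g x : ℂ)) ∧
      Summable (fun k : ℤ => ‖a k‖ * (1 + |(k : ℝ)|) ^ M) ∧
      (∀ x, x ∉ Metric.cthickening ε p.E → g x = 0) ∧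
      Summable (fun n : ℤ => ‖fc p.f n - a n‖ ^ 2 * lam n.natAbs) ∧
      ∑' n : ℤ, ‖fc p.f n - a n‖ ^ 2 * lam n.natAbs ≤ τ := by
  obtain ⟨ρ, hc, h0, h1, hz, ht, hs, hsup⟩ := exists_moll M
  have hl0 : ∀ n, 0 ≤ lam n := fun n => zero_le_one.trans (hlam n)
  have hle : ∀ N (n : ℤ), ‖fc p.f n - fc p.f n * fc (ρ N) n‖ ^ 2 * lam n.natAbs ≤ 4 * (‖fc p.f n‖ ^ 2 * lam n.natAbs) := by
    intro N n
    rw [← mul_assoc]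
    refine mul_le_mul_of_nonneg_right ?_ (hl0 _)
    have : ‖fc p.f n - fc p.f n * fc (ρ N) n‖ ≤ 2 * ‖fc p.f n‖ := by
      refine (norm_sub_le _ _).trans ?_
      rw [norm_mul]
      have := h1 N n
      nlinarith [norm_nonneg (fc p.f n)]
    calc _ ≤ (2 * ‖fc p.f n‖) ^ 2 := by gcongr
      _ = _ := by ring
  have hlim : Tendsto (fun N => ∑' n : ℤ, ‖fc p.f n - fc p.f n * fc (ρ N) n‖ ^ 2 * lam n.natAbs) atTop
      (𝓝 (∑' n : ℤ, (0 : ℝ))) := by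
    refine tendsto_tsum_of_dominated_convergence (p.sum.mul_left 4) (fun n => ?_) (Eventually.of_forall fun N n => ?_)
    · have := ((((ht n).const_mul (fc p.f n)).const_sub (fc p.f n)).norm.pow 2).mul_const (lam n.natAbs)
      simpa using this
    · rw [Real.norm_of_nonneg (mul_nonneg (by positivity) (hl0 _))]
      exact hle N n
  rw [tsum_zero] at hlim
  obtain ⟨N, hN1, hN2⟩ := ((hlim.eventually (gt_mem_nhds hτ)).and (hsup ε hε)).exists
  have hfi := p.integrable
  have hsr : Summable (fun k => ‖fc (ρ N) k‖) := by
    refine Summable.of_nonneg_of_le (fun k => norm_nonneg _) (fun k => ?_) (hs N)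
    refine le_mul_of_one_le_right (norm_nonneg _) (one_le_pow₀ ?_)
    have := abs_nonneg (k : ℝ)
    linarith
  have hser := conv_ser p.f (ρ N) hfi (hc N) hsr
  have hsa : Summable (fun k : ℤ => ‖fc p.f k * fc (ρ N) k‖ * (1 + |(k : ℝ)|) ^ M) := by
    refine Summable.of_nonneg_of_le (fun k => by positivity) (fun k => ?_) ((hs N).mul_left (∫ x, ‖p.f x‖ ∂hm))
    rw [norm_mul, mul_assoc]
    exact mul_le_mul_of_nonneg_right (norm_fc_le _ _) (by positivity)
  have hsa0 : Summable (fun k : ℤ => ‖fc p.f k * fc (ρ N) k‖) := by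
    refine Summable.of_nonneg_of_le (fun k => norm_nonneg _) (fun k => ?_) hsa
    refine le_mul_of_one_le_right (norm_nonneg _) (one_le_pow₀ ?_)
    have := abs_nonneg (k : ℝ)
    linarith
  have hint : ∀ x, ∫ y, ρ N (x - y) ∂hm = 1 := by
    intro x
    have e : ∫ y, ρ N (x - y) ∂hm = ∫ y, ρ N y ∂hm := integral_sub_left_eq_self (μ := AddCircle.haarAddCircle) (ρ N) x
    have := integral_eq_fc_zero (ρ N)
    rw [hz] at this
    rw [e]
    exact_mod_cast this
  have hri : ∀ x, Integrable (fun y => ρ N (x - y)) hm := by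
    intro x
    have hcc : Continuous (fun y => ρ N (x - y)) := (hc N).comp (continuous_const.sub continuous_id)
    exact hcc.integrable_of_hasCompactSupport (HasCompactSupport.of_compactSpace _)
  refine ⟨fun x => ∫ y, p.f y * ρ N (x - y) ∂hm, fun k => fc p.f k * fc (ρ N) k, ?_, ?_, ?_, hser, hsa, ?_, ?_, hN1.le⟩
  · have : Continuous (fun x => ((∫ y, p.f y * ρ N (x - y) ∂hm : ℝ) : ℂ)) := by
      have e : (fun x => ((∫ y, p.f y * ρ N (x - y) ∂hm : ℝ) : ℂ)) = fun x => ∑' k, (fc p.f k * fc (ρ N) k) * fourier k x := by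
        ext x; exact (hser x).tsum_eq.symm
      rw [e]
      refine continuous_tsum (fun k => ?_) hsa0 (fun k x => ?_)
      · exact continuous_const.mul (map_continuous (fourier k))
      · rw [norm_mul, norm_fourier_apply, mul_one]
    exact Complex.continuous_re.comp this
  · intro x
    refine integral_nonneg_of_ae ?_
    filter_upwards [p.bdd] with y hy
    exact mul_nonneg hy.1 (h0 _ _)
  · intro x
    calc _ ≤ ∫ y, 2 * ρ N (x - y) ∂hm := by
          refine integral_mono_of_nonneg ?_ ((hri x).const_mul 2) ?_
          · filter_upwards [p.bdd] with y hy
            exact mul_nonneg hy.1 (h0 _ _)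
          · filter_upwards [p.bdd] with y hy
            exact mul_le_mul_of_nonneg_right hy.2 (h0 _ _)
      _ = 2 := by rw [integral_const_mul, hint, mul_one]
  · intro x hx
    refine integral_eq_zero_of_ae ?_
    filter_upwards [ae_zero_off_support p.f] with y hy
    by_cases hyE : y ∈ p.E
    · have : ε ≤ ‖x - y‖ := by
        by_contra hlt
        push Not at hlt
        exact hx (Metric.mem_cthickening_of_dist_le x y ε p.E hyE (by rw [dist_eq_norm]; exact hlt.le))
      rw [hN2 _ this]; simp
    · rw [hy fun h => hyE (p.supp h)]; simp
  · exact Summable.of_nonneg_of_le (fun n => mul_nonneg (by positivity) (hl0 _)) (hle N) (p.sum.mul_left 4)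

lemma cut_aux (lam : ℕ → ℝ) (hlam : ∀ n, 1 ≤ lam n) (F : ℤ → ℂ) (hF : Summable (fun n : ℤ => ‖F n‖ ^ 2 * lam n.natAbs))
    (C1 B : ℝ) (hC1 : 0 < C1) (M : ℕ) (hsh : ∀ n k : ℤ, lam n.natAbs ≤ C1 * (1 + |(k : ℝ)|) ^ M * lam (n - k).natAbs)
    (g : UnitAddCircle → ℝ) (a : ℤ → ℂ) (hg : Continuous g)
    (hser : ∀ x, HasSum (fun k => a k * fourier k x) (g x : ℂ))
    (haM : Summable (fun k : ℤ => ‖a k‖ * (1 + |(k : ℝ)|) ^ M))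
    (hs1 : Summable (fun n : ℤ => ‖F n - a n‖ ^ 2 * lam n.natAbs))
    (s : ℝ) (hs : 0 < s) (ψ : UnitAddCircle → ℝ) (hψ : Continuous ψ) (hψl : ∀ m, ‖fc ψ m‖ * lam m.natAbs ≤ s)
    (hψs : Summable (fun m => ‖fc ψ m‖)) (hψB : ∑' m, ‖fc ψ m‖ ≤ B) :
    Summable (fun n : ℤ => ‖F n - fc (fun x => (1 / (1 + s)) * (g x * (1 - ψ x))) n‖ ^ 2 * lam n.natAbs) ∧
    ∑' n : ℤ, ‖F n - fc (fun x => (1 / (1 + s)) * (g x * (1 - ψ x))) n‖ ^ 2 * lam n.natAbs ≤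
      3 * (s ^ 2 * (∑' n : ℤ, ‖F n‖ ^ 2 * lam n.natAbs) + (∑' n : ℤ, ‖F n - a n‖ ^ 2 * lam n.natAbs) +
        (∑' k : ℤ, ‖a k‖ * (C1 * (1 + |(k : ℝ)|) ^ M)) * (∑' k, ‖a k‖) * B * s) := by
  have hl0 : ∀ n, 0 ≤ lam n := fun n => zero_le_one.trans (hlam n)
  have hsa0 : Summable (fun k : ℤ => ‖a k‖) := by
    refine Summable.of_nonneg_of_le (fun k => norm_nonneg _) (fun k => ?_) haM
    refine le_mul_of_one_le_right (norm_nonneg _) (one_le_pow₀ ?_)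
    have := abs_nonneg (k : ℝ)
    linarith
  have hψi : ∀ h : UnitAddCircle → ℂ, Continuous h → Integrable h hm := fun h hh =>
    hh.integrable_of_hasCompactSupport (HasCompactSupport.of_compactSpace _)
  set c : ℤ → ℂ := fun n => ∑' k, a k * fc ψ (n - k) with hc
  obtain ⟨hcs, hcb⟩ := conv_bound (fun n => lam n.natAbs) (fun n => hl0 _) (fun k => C1 * (1 + |(k : ℝ)|) ^ M)
    hsh a (fc ψ) hsa0 (by
      refine (haM.mul_left C1).congr fun k => ?_
      ring) s B hs.le (fun k => by positivity) hψl hψs hψB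
  have hfc : ∀ n, fc (fun x => (1 / (1 + s)) * (g x * (1 - ψ x))) n = ((1 / (1 + s) : ℝ) : ℂ) * (a n - c n) := by
    intro n
    have e1 := ser_coeff a hsa0 (fun x => (g x : ℂ)) hser n
    have e2 := ser_mul a hsa0 (fun x => (g x : ℂ)) (fun x => (ψ x : ℂ)) hser (hψi _ (by fun_prop)) n
    have e3 : c n = ∫ x, (fourier (-n) x : ℂ) * ((g x : ℂ) * (ψ x : ℂ)) ∂hm := e2.symm
    have e4 : a n = ∫ x, (fourier (-n) x : ℂ) * (g x : ℂ) ∂hm := e1.symm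
    have hfo : Continuous (fun x : UnitAddCircle => (fourier (-n) x : ℂ)) := map_continuous (fourier (-n))
    rw [e3, e4, ← integral_sub (hψi _ (by fun_prop)) (hψi _ (by fun_prop)), ← integral_const_mul]
    show ∫ x, (fourier (-n) x : ℂ) • (((1 / (1 + s)) * (g x * (1 - ψ x)) : ℝ) : ℂ) ∂hm = _
    congr 1
    ext x
    rw [smul_eq_mul]
    push_cast
    ring
  have hle : ∀ n : ℤ, ‖F n - fc (fun x => (1 / (1 + s)) * (g x * (1 - ψ x))) n‖ ^ 2 * lam n.natAbs ≤
      3 * (s ^ 2 * (‖F n‖ ^ 2 * lam n.natAbs) + ‖F n - a n‖ ^ 2 * lam n.natAbs + ‖c n‖ ^ 2 * lam n.natAbs) := by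
    intro n
    have h1 : ‖F n - fc (fun x => (1 / (1 + s)) * (g x * (1 - ψ x))) n‖ ≤ s * ‖F n‖ + ‖F n - a n‖ + ‖c n‖ := by
      have e : F n - fc (fun x => (1 / (1 + s)) * (g x * (1 - ψ x))) n =
          ((1 / (1 + s) : ℝ) : ℂ) * ((s : ℂ) * F n + (F n - a n) + c n) := by
        rw [hfc]
        have : (1 + s : ℂ) ≠ 0 := by
          have : (1 + s : ℝ) ≠ 0 := by positivity
          exact_mod_cast this
        push_cast
        field_simp
        ring
      rw [e, norm_mul, Complex.norm_real, Real.norm_of_nonneg (by positivity)]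
      have h2 : ‖(s : ℂ) * F n + (F n - a n) + c n‖ ≤ s * ‖F n‖ + ‖F n - a n‖ + ‖c n‖ := by
        refine norm_add₃_le.trans ?_
        rw [norm_mul, Complex.norm_real, Real.norm_of_nonneg hs.le]
      refine le_trans (mul_le_of_le_one_left (norm_nonneg _) ?_) h2
      rw [div_le_one (by positivity)]; linarith
    calc _ ≤ (s * ‖F n‖ + ‖F n - a n‖ + ‖c n‖) ^ 2 * lam n.natAbs := by
          refine mul_le_mul_of_nonneg_right ?_ (hl0 _)
          gcongr
      _ ≤ (3 * ((s * ‖F n‖) ^ 2 + ‖F n - a n‖ ^ 2 + ‖c n‖ ^ 2)) * lam n.natAbs := by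
          refine mul_le_mul_of_nonneg_right ?_ (hl0 _)
          nlinarith [sq_nonneg (s * ‖F n‖ - ‖F n - a n‖), sq_nonneg (s * ‖F n‖ - ‖c n‖), sq_nonneg (‖F n - a n‖ - ‖c n‖)]
      _ = _ := by ring
  have hS := (((hF.mul_left (s ^ 2)).add hs1).add hcs).mul_left 3
  have hsm := Summable.of_nonneg_of_le (fun n => mul_nonneg (by positivity) (hl0 _)) hle hS
  refine ⟨hsm, (hsm.tsum_le_tsum hle hS).trans ?_⟩
  rw [tsum_mul_left, ((hF.mul_left (s ^ 2)).add hs1).tsum_add hcs, (hF.mul_left (s ^ 2)).tsum_add hs1, tsum_mul_left]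
  gcongr

/-- distance from points to the circle set is bounded -/
lemma infDist_le_one (x : UnitAddCircle) (K : Set UnitAddCircle) (hK : K.Nonempty) : Metric.infDist x K ≤ 1 := by
  obtain ⟨y, hy⟩ := hK
  refine (Metric.infDist_le_dist_of_mem hy).trans ?_
  rw [dist_eq_norm]
  have := AddCircle.norm_le_half_period (p := 1) (x := x - y) one_ne_zero
  norm_num at this
  linarith

lemma dC_le {E K : Set UnitAddCircle} (hE : E.Nonempty) (hK : K.Nonempty) {a b : ℝ}
    (h1 : ∀ x ∈ E, Metric.infDist x K ≤ a) (h2 : ∀ x ∈ K, Metric.infDist x E ≤ b) : dC E K ≤ a + b := by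
  have := hE.to_subtype
  have := hK.to_subtype
  exact add_le_add (ciSup_le fun x => h1 x x.2) (ciSup_le fun x => h2 x x.2)

lemma move_pt (x0 e : UnitAddCircle) (r : ℝ) (hr : 0 < r) (hr8 : r ≤ 1 / 8) :
    ∃ e', dist e e' ≤ 2 * r ∧ e' ∉ Metric.ball x0 r := by
  by_cases h : e ∈ Metric.ball x0 r
  · have hn : ‖((2 * r : ℝ) : UnitAddCircle)‖ = 2 * r := by
      rw [(AddCircle.norm_coe_eq_abs_iff (p := 1) one_ne_zero).2, abs_of_pos (by linarith)]
      rw [abs_of_pos (by linarith)]; norm_num; linarith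
    refine ⟨e + ((2 * r : ℝ) : UnitAddCircle), ?_, ?_⟩
    · rw [dist_eq_norm]; simp only [sub_add_cancel_left, norm_neg]; rw [hn]
    · intro h'
      rw [Metric.mem_ball] at h h'
      have := dist_triangle_right (e + ((2 * r : ℝ) : UnitAddCircle)) e x0
      rw [dist_eq_norm, add_sub_cancel_left, hn] at this
      linarith
  · exact ⟨e, by simp; exact hr.le, h⟩

lemma dens (lam : ℕ → ℝ) (hlam : ∀ n, 1 ≤ lam n) (C0 : ℝ) (hC0 : 1 ≤ C0) (M : ℕ)
    (h : ∀ n k : ℕ, 1 ≤ n → n ≤ k → lam k ≤ C0 * ((k : ℝ) / n) ^ M * lam n ∧ lam n ≤ C0 * ((k : ℝ) / n) ^ M * lam k)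
    (hdiv : ¬ Summable (fun n : ℕ => 1 / lam (n + 1))) (p : LPair lam) (x0 : UnitAddCircle) (ε : ℝ) (hε : 0 < ε) :
    ∃ q : LPair lam, x0 ∉ q.E ∧ dPair lam p q < ε := by
  have hl0 : ∀ n, 0 ≤ lam n := fun n => zero_le_one.trans (hlam n)
  obtain ⟨C1, hC1, hsh⟩ := lam_shift lam hlam C0 hC0 M h
  obtain ⟨B, hB, hphi⟩ := exists_phi lam hlam C0 hC0 M h hdiv
  set τ : ℝ := (ε / 2) ^ 2 / 12 with hτ
  have hτ0 : 0 < τ := by positivity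
  obtain ⟨g, a, hgc, hg0, hg2, hser, haM, hgE, hs1, hs2⟩ := moll_approx hlam p M (ε / 8) τ (by positivity) hτ0
  set F0 := ∑' n : ℤ, ‖fc p.f n‖ ^ 2 * lam n.natAbs with hF0
  have hF00 : 0 ≤ F0 := tsum_nonneg fun n => mul_nonneg (by positivity) (hl0 _)
  set D := (∑' k : ℤ, ‖a k‖ * (C1 * (1 + |(k : ℝ)|) ^ M)) * (∑' k, ‖a k‖) * B with hD
  have hD0 : 0 ≤ D := mul_nonneg (mul_nonneg (tsum_nonneg fun k => by positivity) (tsum_nonneg fun k => by positivity)) hB.le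
  set s : ℝ := min 1 (τ / (F0 + D + 1)) with hs
  have hs0 : 0 < s := lt_min one_pos (by positivity)
  have hs11 : s ≤ 1 := min_le_left _ _
  have hsF : s * (F0 + D + 1) ≤ τ := by
    have : s ≤ τ / (F0 + D + 1) := min_le_right _ _
    rwa [le_div_iff₀ (by positivity)] at this
  obtain ⟨φ, hφc, hφ1, hφs, ⟨r, hr, hφr⟩, hφl, hφsum, hφB⟩ := hphi s hs0
  have hft := fun n => fc_translate φ x0 n
  set ψ : UnitAddCircle → ℝ := fun x => φ (x - x0) with hψ
  have hψc : Continuous ψ := hφc.comp (continuous_id.sub continuous_const)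
  obtain ⟨hd1, hd2⟩ := cut_aux lam hlam (fc p.f) p.sum C1 B hC1 M hsh g a hgc hser haM hs1 s hs0 ψ hψc
    (by simpa only [hft] using hφl) (by simpa only [hft] using hφsum) (by simpa only [hft] using hφB)
  set f' : UnitAddCircle → ℝ := fun x => (1 / (1 + s)) * (g x * (1 - ψ x)) with hf'
  have hf'c : Continuous f' := by fun_prop
  have hf'0 : ∀ x, 0 ≤ f' x := fun x => mul_nonneg (by positivity) (mul_nonneg (hg0 x) (by have := hφ1 (x - x0); simp only [hψ]; linarith))
  have hf'2 : ∀ x, f' x ≤ 2 := by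
    intro x
    simp only [hf']
    rw [one_div, inv_mul_le_iff₀ (by positivity), mul_comm (1 + s)]
    refine mul_le_mul (hg2 x) ?_ ?_ (by norm_num)
    · have := hφs (x - x0); simp only [hψ]; linarith
    · have := hφ1 (x - x0); simp only [hψ]; linarith
  set r' := min r (min (ε / 16) (1 / 8)) with hr'
  have hr'0 : 0 < r' := lt_min hr (lt_min (by positivity) (by norm_num))
  have hr'r : r' ≤ r := min_le_left _ _
  have hr'ε : r' ≤ ε / 16 := (min_le_right _ _).trans (min_le_left _ _)
  have hr'8 : r' ≤ 1 / 8 := (min_le_right _ _).trans (min_le_right _ _)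
  set K := Metric.cthickening (ε / 8) p.E \ Metric.ball x0 r' with hK
  have hKc : IsClosed K := Metric.isClosed_cthickening.sdiff Metric.isOpen_ball
  have hnear : ∀ e ∈ p.E, ∃ e' ∈ K, dist e e' ≤ ε / 8 := by
    intro e he
    obtain ⟨e', h1, h2⟩ := move_pt x0 e r' hr'0 hr'8
    have h3 : dist e e' ≤ ε / 8 := by linarith
    exact ⟨e', ⟨Metric.mem_cthickening_of_dist_le e' e _ _ he (by rwa [dist_comm]), h2⟩, h3⟩
  have hKne : K.Nonempty := by
    obtain ⟨e, he⟩ := p.nonempty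
    obtain ⟨e', he', _⟩ := hnear e he
    exact ⟨e', he'⟩
  have hzero : ∀ x, x ∈ Kᶜ → f' x = 0 := by
    intro x hx
    by_cases hxb : x ∈ Metric.ball x0 r'
    · have : ψ x = 1 := by
        apply hφr
        rw [Metric.mem_ball, dist_eq_norm] at hxb
        linarith
      simp only [hf', this]; ring
    · have : g x = 0 := hgE x fun hxE => hx ⟨hxE, hxb⟩
      simp only [hf', this]; ring
  have hf'sum : Summable (fun n : ℤ => ‖fc f' n‖ ^ 2 * lam n.natAbs) := by
    refine Summable.of_nonneg_of_le (fun n => mul_nonneg (by positivity) (hl0 _)) (fun n => ?_) ((p.sum.add hd1).mul_left 2)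
    have h1 : ‖fc f' n‖ ≤ ‖fc p.f n‖ + ‖fc p.f n - fc f' n‖ := by
      have := norm_sub_le (fc p.f n) (fc p.f n - fc f' n)
      rwa [sub_sub_cancel] at this
    rw [← add_mul, ← mul_assoc]
    refine mul_le_mul_of_nonneg_right ?_ (hl0 _)
    calc _ ≤ (‖fc p.f n‖ + ‖fc p.f n - fc f' n‖) ^ 2 := by gcongr
      _ ≤ _ := by nlinarith [sq_nonneg (‖fc p.f n‖ - ‖fc p.f n - fc f' n‖)]
  refine ⟨⟨f', K, ?_, Eventually.of_forall fun x => ⟨hf'0 x, hf'2 x⟩, hf'sum, hKc.isCompact, hKne, ?_⟩, ?_, ?_⟩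
  · refine MemLp.of_bound hf'c.aestronglyMeasurable 2 (Eventually.of_forall fun x => ?_)
    rw [Real.norm_of_nonneg (hf'0 x)]; exact hf'2 x
  · intro x hx
    by_contra hxK
    exact hx ⟨Kᶜ, ⟨hKc.isOpen_compl, Eventually.of_forall hzero⟩, hxK⟩
  · intro hx
    exact hx.2 (Metric.mem_ball_self hr'0)
  · have h1 : dlam lam p.f f' ≤ ε / 2 := by
      unfold dlam
      apply Real.sqrt_le_iff.2 ⟨by positivity, hd2.trans ?_⟩
      have : s ^ 2 * F0 ≤ s * F0 := mul_le_mul_of_nonneg_right (by nlinarith) hF00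
      have h12 : (ε / 2) ^ 2 = 12 * τ := by rw [hτ]; ring
      rw [h12]
      nlinarith
    have h2 : dC p.E K ≤ ε / 8 + ε / 8 := by
      refine dC_le p.nonempty hKne (fun e he => ?_) (fun e he => ?_)
      · obtain ⟨e', he', hd⟩ := hnear e he
        exact (Metric.infDist_le_dist_of_mem he').trans hd
      · exact ENNReal.toReal_le_of_le_ofReal (by positivity) (Metric.mem_cthickening_iff.1 he.1)
    show dlam lam p.f f' + dC p.E K < ε
    linarith

lemma wt_sq {lam : ℕ → ℝ} (hlam : ∀ n, 1 ≤ lam n) (z : ℂ) (n : ℕ) :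
    ‖z * ((Real.sqrt (lam n) : ℝ) : ℂ)‖ ^ 2 = ‖z‖ ^ 2 * lam n := by
  rw [norm_mul, mul_pow, Complex.norm_real, Real.norm_of_nonneg (Real.sqrt_nonneg _),
    Real.sq_sqrt (zero_le_one.trans (hlam n))]

lemma memlp2 (u : ℤ → ℂ) (h : Summable (fun n => ‖u n‖ ^ 2)) : Memℓp u 2 := by
  apply memℓp_gen
  simpa using h

lemma lp2_summable (u : lp (fun _ : ℤ => ℂ) 2) : Summable (fun n => ‖u n‖ ^ 2) := by
  have := (lp.memℓp u).summable (by norm_num)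
  simpa using this

lemma lp2_norm (u : lp (fun _ : ℤ => ℂ) 2) : ‖u‖ = Real.sqrt (∑' n, ‖u n‖ ^ 2) := by
  rw [lp.norm_eq_tsum_rpow (by norm_num) u, Real.sqrt_eq_rpow]
  simp

def Phi1 {lam : ℕ → ℝ} (hlam : ∀ n, 1 ≤ lam n) (p : LPair lam) : lp (fun _ : ℤ => ℂ) 2 :=
  ⟨fun n => fc p.f n * ((Real.sqrt (lam n.natAbs) : ℝ) : ℂ), memlp2 _ (by
    simp_rw [wt_sq hlam]; exact p.sum)⟩

def Phi2 {lam : ℕ → ℝ} (p : LPair lam) : TopologicalSpace.NonemptyCompacts UnitAddCircle :=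
  ⟨⟨p.E, p.cpt⟩, p.nonempty⟩

def Phi {lam : ℕ → ℝ} (hlam : ∀ n, 1 ≤ lam n) (p : LPair lam) :
    lp (fun _ : ℤ => ℂ) 2 × TopologicalSpace.NonemptyCompacts UnitAddCircle := (Phi1 hlam p, Phi2 p)

lemma Phi1_apply {lam : ℕ → ℝ} (hlam : ∀ n, 1 ≤ lam n) (p : LPair lam) (n : ℤ) :
    Phi1 hlam p n = fc p.f n * ((Real.sqrt (lam n.natAbs) : ℝ) : ℂ) := rfl

lemma dlam_eq {lam : ℕ → ℝ} (hlam : ∀ n, 1 ≤ lam n) (p q : LPair lam) :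
    dlam lam p.f q.f = dist (Phi1 hlam p) (Phi1 hlam q) := by
  rw [dist_eq_norm, lp2_norm, dlam]
  congr 2
  ext n
  rw [lp.coeFn_sub, Pi.sub_apply, Phi1_apply, Phi1_apply, ← sub_mul, wt_sq hlam]

lemma bddA (E K : Set UnitAddCircle) (hK : K.Nonempty) :
    BddAbove (Set.range fun x : E => Metric.infDist (x : UnitAddCircle) K) :=
  ⟨1, by rintro _ ⟨x, rfl⟩; exact infDist_le_one _ _ hK⟩

lemma infDist_le_dC {E K : Set UnitAddCircle} (hE : E.Nonempty) (hK : K.Nonempty) :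
    (∀ x ∈ E, Metric.infDist x K ≤ dC E K) ∧ (∀ x ∈ K, Metric.infDist x E ≤ dC E K) := by
  constructor
  · intro x hx
    have h1 := le_ciSup (bddA E K hK) ⟨x, hx⟩
    have h2 : 0 ≤ ⨆ y : K, Metric.infDist (y : UnitAddCircle) E := Real.iSup_nonneg fun _ => Metric.infDist_nonneg
    unfold dC
    simp only at h1
    linarith
  · intro x hx
    have h1 := le_ciSup (bddA K E hE) ⟨x, hx⟩
    have h2 : 0 ≤ ⨆ y : E, Metric.infDist (y : UnitAddCircle) K := Real.iSup_nonneg fun _ => Metric.infDist_nonneg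
    unfold dC
    simp only at h1
    linarith

lemma dC_nonneg (E K : Set UnitAddCircle) : 0 ≤ dC E K :=
  add_nonneg (Real.iSup_nonneg fun _ => Metric.infDist_nonneg) (Real.iSup_nonneg fun _ => Metric.infDist_nonneg)

lemma hfin {lam : ℕ → ℝ} (p q : LPair lam) : Metric.hausdorffEDist p.E q.E ≠ ⊤ :=
  Metric.hausdorffEDist_ne_top_of_nonempty_of_bounded p.nonempty q.nonempty p.cpt.isBounded q.cpt.isBounded

lemma dPair_le {lam : ℕ → ℝ} (hlam : ∀ n, 1 ≤ lam n) (p q : LPair lam) :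
    dPair lam p q ≤ 3 * dist (Phi hlam p) (Phi hlam q) := by
  have h1 : dC p.E q.E ≤ dist (Phi2 p) (Phi2 q) + dist (Phi2 p) (Phi2 q) := by
    rw [Metric.NonemptyCompacts.dist_eq]
    refine dC_le p.nonempty q.nonempty (fun x hx => Metric.infDist_le_hausdorffDist_of_mem hx (hfin p q)) (fun x hx => ?_)
    rw [Metric.hausdorffDist_comm]
    exact Metric.infDist_le_hausdorffDist_of_mem hx (hfin q p)
  have h2 : dist (Phi1 hlam p) (Phi1 hlam q) ≤ dist (Phi hlam p) (Phi hlam q) := le_max_left _ _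
  have h3 : dist (Phi2 p) (Phi2 q) ≤ dist (Phi hlam p) (Phi hlam q) := le_max_right _ _
  unfold dPair
  rw [dlam_eq hlam]
  linarith

lemma le_dPair {lam : ℕ → ℝ} (hlam : ∀ n, 1 ≤ lam n) (p q : LPair lam) :
    dist (Phi hlam p) (Phi hlam q) ≤ dPair lam p q := by
  unfold dPair
  rw [dlam_eq hlam]
  have h1 := dC_nonneg p.E q.E
  have h2 : dist (Phi2 p) (Phi2 q) ≤ dC p.E q.E := by
    rw [Metric.NonemptyCompacts.dist_eq]
    exact Metric.hausdorffDist_le_of_infDist h1 (infDist_le_dC p.nonempty q.nonempty).1 (infDist_le_dC p.nonempty q.nonempty).2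
  have h3 : 0 ≤ dist (Phi1 hlam p) (Phi1 hlam q) := dist_nonneg
  exact max_le (by show dist (Phi1 hlam p) (Phi1 hlam q) ≤ _; linarith) (by show dist (Phi2 p) (Phi2 q) ≤ _; linarith)

lemma closed_aux {lam : ℕ → ℝ} (hlam : ∀ n, 1 ≤ lam n) (p : ℕ → LPair lam) (b : lp (fun _ : ℤ => ℂ) 2)
    (K : TopologicalSpace.NonemptyCompacts UnitAddCircle)
    (hb : Tendsto (fun k => Phi hlam (p k)) atTop (𝓝 (b, K))) : ∃ q : LPair lam, Phi hlam q = (b, K) := by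
  have hb1 : Tendsto (fun k => Phi1 hlam (p k)) atTop (𝓝 b) := (continuous_fst.tendsto _).comp hb
  have hb2 : Tendsto (fun k => Phi2 (p k)) atTop (𝓝 K) := (continuous_snd.tendsto _).comp hb
  have hs1 : ∀ n, 1 ≤ Real.sqrt (lam n) := fun n => Real.one_le_sqrt.2 (hlam n)
  have hs0 : ∀ n, ((Real.sqrt (lam n) : ℝ) : ℂ) ≠ 0 := fun n => by
    have := hs1 n
    exact_mod_cast (by linarith : Real.sqrt (lam n) ≠ 0)
  have hsn : ∀ (z : ℂ) n, ‖z‖ ≤ ‖z * ((Real.sqrt (lam n) : ℝ) : ℂ)‖ := fun z n => by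
    rw [norm_mul, Complex.norm_real, Real.norm_of_nonneg (Real.sqrt_nonneg _)]
    exact le_mul_of_one_le_right (norm_nonneg _) (hs1 n)
  let c : lp (fun _ : ℤ => ℂ) 2 := ⟨fun n => b n / ((Real.sqrt (lam n.natAbs) : ℝ) : ℂ), memlp2 _ (by
    refine Summable.of_nonneg_of_le (fun n => by positivity) (fun n => ?_) (lp2_summable b)
    have := hsn (b n / ((Real.sqrt (lam n.natAbs) : ℝ) : ℂ)) n.natAbs
    rw [div_mul_cancel₀ _ (hs0 _)] at this
    gcongr)⟩
  have hc : ∀ n, c n * ((Real.sqrt (lam n.natAbs) : ℝ) : ℂ) = b n := fun n => div_mul_cancel₀ _ (hs0 _)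
  let F : Lp ℂ 2 (@AddCircle.haarAddCircle 1 _) := fourierBasis.repr.symm c
  have hFc : ∀ n, fourierCoeff F n = c n := fun n => by
    rw [← fourierBasis_repr]; simp [F]
  have hmem : ∀ k, MemLp (fun x => ((p k).f x : ℂ)) 2 (@AddCircle.haarAddCircle 1 _) := fun k => (p k).memLp.ofReal
  let P : ℕ → Lp ℂ 2 (@AddCircle.haarAddCircle 1 _) := fun k => (hmem k).toLp _
  have hP : ∀ k, ⇑(P k) =ᵐ[@AddCircle.haarAddCircle 1 _] fun x => ((p k).f x : ℂ) := fun k => (hmem k).coeFn_toLp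
  have hPc : ∀ k n, fourierBasis.repr (P k) n = fc (p k).f n := fun k n => by
    rw [fourierBasis_repr, fourierCoeff_congr_ae (hP k)]; rfl
  have hPF : Tendsto P atTop (𝓝 F) := by
    rw [tendsto_iff_dist_tendsto_zero] at hb1 ⊢
    refine squeeze_zero (fun _ => dist_nonneg) (fun k => ?_) hb1
    rw [← fourierBasis.repr.dist_map, dist_eq_norm, dist_eq_norm]
    refine lp.norm_mono (by norm_num) fun n => ?_
    simp only [lp.coeFn_sub, Pi.sub_apply, hPc, Phi1_apply, F, LinearIsometryEquiv.apply_symm_apply]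
    rw [← hc n, ← sub_mul]
    exact hsn _ _
  obtain ⟨ns, hns, hae⟩ := (tendstoInMeasure_of_tendsto_Lp hPF).exists_seq_tendsto_ae
  have hae2 : ∀ᵐ x ∂hm, Tendsto (fun i => (((p (ns i)).f x : ℝ) : ℂ)) atTop (𝓝 (F x)) := by
    have := ae_all_iff.2 hP
    filter_upwards [hae, this] with x hx1 hx2
    simpa only [hx2] using hx1
  have hre : ∀ᵐ x ∂hm, Tendsto (fun i => (p (ns i)).f x) atTop (𝓝 (F x).re) := by
    filter_upwards [hae2] with x hx
    exact (Complex.continuous_re.tendsto _).comp hx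
  have him : ∀ᵐ x ∂hm, F x = (((F x).re : ℝ) : ℂ) := by
    filter_upwards [hae2, hre] with x hx hx2
    exact tendsto_nhds_unique hx ((Complex.continuous_ofReal.tendsto _).comp hx2)
  have hfc : ∀ n, fc (fun x => (F x).re) n = c n := by
    intro n
    rw [← hFc]
    unfold fc
    have : ⇑F =ᵐ[@AddCircle.haarAddCircle 1 _] fun x => (((F x).re : ℝ) : ℂ) := him
    rw [fourierCoeff_congr_ae this]
  refine ⟨⟨fun x => (F x).re, K, (Lp.memLp F).re, ?_, ?_, K.isCompact, K.nonempty, ?_⟩, ?_⟩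
  · have hbd : ∀ᵐ x ∂hm, ∀ i, 0 ≤ (p (ns i)).f x ∧ (p (ns i)).f x ≤ 2 := ae_all_iff.2 fun i => (p (ns i)).bdd
    filter_upwards [hbd, hre] with x h1 h2
    exact ⟨ge_of_tendsto' h2 fun i => (h1 i).1, le_of_tendsto' h2 fun i => (h1 i).2⟩
  · refine (lp2_summable b).congr fun n => ?_
    rw [hfc, ← hc, wt_sq hlam]
  · intro x hx
    by_contra hxK
    apply hx
    have hδ : 0 < Metric.infDist x K := (K.isCompact.isClosed.notMem_iff_infDist_pos K.nonempty).1 hxK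
    refine ⟨Metric.ball x (Metric.infDist x K / 2), ⟨Metric.isOpen_ball, ?_⟩, Metric.mem_ball_self (by positivity)⟩
    have hz : ∀ᵐ y ∂hm, ∀ i, y ∉ measSupport (p (ns i)).f → (p (ns i)).f y = 0 :=
      ae_all_iff.2 fun i => ae_zero_off_support _
    have hev : ∀ᶠ i in atTop, dist (Phi2 (p (ns i))) K < Metric.infDist x K / 2 :=
      (Metric.tendsto_nhds.1 (hb2.comp hns.tendsto_atTop)) _ (by positivity)
    filter_upwards [hz, hre] with y h1 h2 hy
    refine tendsto_nhds_unique h2 (tendsto_const_nhds.congr' ?_)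
    filter_upwards [hev] with i hi
    refine (h1 i fun hys => ?_).symm
    have hyE : y ∈ (Phi2 (p (ns i)) : Set UnitAddCircle) := (p (ns i)).supp hys
    have h3 : Metric.infDist y K ≤ dist (Phi2 (p (ns i))) K :=
      Metric.infDist_le_hausdorffDist_of_mem hyE (edist_ne_top (Phi2 (p (ns i))) K)
    have h4 : Metric.infDist x K ≤ Metric.infDist y K + dist x y := Metric.infDist_le_infDist_add_dist
    rw [Metric.mem_ball, dist_comm] at hy
    linarith
  · refine Prod.ext ?_ ?_
    · ext n
      show fc (fun x => (F x).re) n * _ = b n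
      rw [hfc, hc]
    · exact SetLike.coe_injective rfl

/-- Baire category. Under `Σ 1/λ_n = ∞`, the doubling condition and
`λ_n ≥ 1`, the set of pairs `(f,E)` in `X` for which `E` has empty interior is comeagre:
it contains a countable intersection of `d_λ`-open, `d_λ`-dense subsets of `X`, and this
intersection is itself `d_λ`-dense. -/
theorem statement16 (lam : ℕ → ℝ) (hlam : ∀ n, 1 ≤ lam n)
    (hdiv : ¬ Summable (fun n : ℕ => 1 / lam (n + 1)))
    (hdbl : ∃ C : ℝ, 1 < C ∧ ∀ n k : ℕ, 1 ≤ n → n ≤ k → k ≤ 2 * n →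
      C⁻¹ * lam n ≤ lam k ∧ lam k ≤ C * lam n) :
    ∃ G : ℕ → Set (LPair lam),
      (∀ k, ∀ p ∈ G k, ∃ η : ℝ, 0 < η ∧ ∀ q : LPair lam, dPair lam p q < η → q ∈ G k) ∧
      (∀ k, ∀ p : LPair lam, ∀ η : ℝ, 0 < η → ∃ q ∈ G k, dPair lam p q < η) ∧
      (∀ p : LPair lam, ∀ η : ℝ, 0 < η → ∃ q ∈ ⋂ k, G k, dPair lam p q < η) ∧
      (⋂ k, G k) ⊆ {p : LPair lam | interior p.E = (∅ : Set UnitAddCircle)} := by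
  obtain ⟨C0, hC0, M, h⟩ := lam_pow lam hlam hdbl
  let d : ℕ → UnitAddCircle := TopologicalSpace.denseSeq UnitAddCircle
  let G : ℕ → Set (LPair lam) := fun k => {p | d k ∉ p.E}
  have hopen : ∀ k, ∀ p ∈ G k, ∃ η : ℝ, 0 < η ∧ ∀ q : LPair lam, dPair lam p q < η → q ∈ G k := by
    intro k p hp
    refine ⟨Metric.infDist (d k) p.E, (p.cpt.isClosed.notMem_iff_infDist_pos p.nonempty).1 hp, fun q hq hk => ?_⟩
    have h1 := (infDist_le_dC p.nonempty q.nonempty).2 _ hk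
    have h2 : 0 ≤ dlam lam p.f q.f := Real.sqrt_nonneg _
    unfold dPair at hq
    linarith
  have hdense : ∀ k, ∀ p : LPair lam, ∀ η : ℝ, 0 < η → ∃ q ∈ G k, dPair lam p q < η := by
    intro k p η hη
    obtain ⟨q, h1, h2⟩ := dens lam hlam C0 hC0 M h hdiv p (d k) η hη
    exact ⟨q, h1, h2⟩
  refine ⟨G, hopen, hdense, ?_, ?_⟩
  · letI : PseudoMetricSpace (LPair lam) := PseudoMetricSpace.induced (Phi hlam) inferInstance
    have hdist : ∀ p q : LPair lam, dist p q = dist (Phi hlam p) (Phi hlam q) := fun _ _ => rfl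
    have hiso : Isometry (Phi hlam) := Isometry.of_dist_eq fun _ _ => rfl
    have hcs : CompleteSpace (LPair lam) := by
      rw [completeSpace_iff_isComplete_range hiso.isUniformInducing]
      apply IsClosed.isComplete
      apply IsSeqClosed.isClosed
      intro u v hu huv
      choose p hp using hu
      have : Tendsto (fun k => Phi hlam (p k)) atTop (𝓝 (v.1, v.2)) := by
        simpa only [hp] using huv
      obtain ⟨q, hq⟩ := closed_aux hlam p v.1 v.2 this
      exact ⟨q, hq⟩
    have hD : Dense (⋂ k, G k) := by
      refine dense_iInter_of_isOpen_nat (fun k => ?_) (fun k => ?_)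
      · rw [Metric.isOpen_iff]
        intro p hp
        obtain ⟨η, hη, hq⟩ := hopen k p hp
        refine ⟨η / 3, by positivity, fun q hqb => hq q ?_⟩
        rw [Metric.mem_ball, dist_comm, hdist] at hqb
        have := dPair_le hlam p q
        linarith
      · rw [Metric.dense_iff]
        intro p η hη
        obtain ⟨q, hq, hd⟩ := hdense k p η hη
        refine ⟨q, ?_, hq⟩
        rw [Metric.mem_ball, dist_comm, hdist]
        exact (le_dPair hlam p q).trans_lt hd
    intro p η hη
    obtain ⟨q, hq1, hq2⟩ := Metric.dense_iff.1 hD p (η / 3) (by positivity)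
    refine ⟨q, hq2, ?_⟩
    rw [Metric.mem_ball, dist_comm, hdist] at hq1
    have := dPair_le hlam p q
    linarith
  · intro p hp
    rw [Set.mem_setOf_eq, Set.eq_empty_iff_forall_notMem]
    intro x hx
    obtain ⟨y, hy1, k, rfl⟩ := (TopologicalSpace.denseRange_denseSeq UnitAddCircle).inter_open_nonempty
      (interior p.E) isOpen_interior ⟨x, hx⟩
    exact (Set.mem_iInter.1 hp k) (interior_subset hy1)
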